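/- Let $X$ be a topological space and $K$ a sheaf of commutative rings on $X$. A matrix $K$-algebra of size $q+1$ is a sheaf of associative unital $K$-algebras with a decomposition $A=\bigoplus_{i,j=0}^q A_{ij}$ into $K$-submodules, multiplied as matrices: the product maps $A_{ij}\otimes_K A_{jk}$ into $A_{ik}$, the product of $A_{ij}$ and $A_{kl}$ is zero for $j\ne k$, and $1=\sum_i 1_i$ with $1_i\in A_{ii}$, so that the left action of $A_{ii}$ and the right action of $A_{jj}$ on $A_{ij}$ are unital. Assume that (a) for all $i,j$, the sheaf $A_{ij}$ is locally free of rank one as a left $A_{ii}$-module and as a right $A_{jj}$-module; (b) for all $j\le i$, the morphism of sheaves $A_{ij}\to \underline{\mathrm{Hom}}_{A_{jj}}(A_{ji},A_{jj})$, $x\mapsto (y\mapsto yx)$, into the sheaf of homomorphisms of left $A_{jj}$-modules, given by the product $A_{ji}\otimes A_{ij}\to A_{jj}$, is an isomorphism. Let $f\colon[p]\to[q]$ be a morphism in the simplex category $\Delta$, i.e. a non-decreasing map $\{0,\dots,p\}\to\{0,\dots,q\}$, and let $f^\sharp A=\bigoplus_{i,j=0}^p (f^\sharp A)_{ij}$ be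 the matrix algebra with $(f^\sharp A)_{ij}=A_{f(i)f(j)}$ and the matrix product induced by that of $A$. Let $A_f=\bigoplus_{i=0}^q\bigoplus_{j=0}^p A_{i f(j)}$, an $(A,f^\sharp A)$-bimodule, and $A_f^{-1}=\bigoplus_{i=0}^p\bigoplus_{j=0}^q A_{f(i)j}$, an $(f^\sharp A,A)$-bimodule, with actions given by matrix multiplication. Let $$\overrightarrow{\alpha}_f\colon A_f\otimes_{f^\sharp A}A_f^{-1}\to A,\qquad \overleftarrow{\alpha}_f\colon A_f^{-1}\otimes_A A_f\to f^\sharp A$$ be the morphisms of bimodules given by matrix multiplication, $\alpha(b\otimes c)_{ij}=\sum_k b_{ik}c_{kj}$ (for $\alpha$ either of the two), where the tensor products are tensor products of sheaves. Then $A_f$ and $A_f^{-1}$, together with $\overrightarrow{\alpha}_f$ and $\overleftarrow{\alpha}_f$, implement a Morita equivalence between $f^\sharp A$ and $A$. That is, $\overrightarrow{\alpha}_f$ and $\overleftarrow{\alpha}_f$ are isomorphisms of bimodules, and the functors $A_f\otimes_{f^\sharp A}(-)$ and $A_f^{-1}\otimes_A(-)$ between the categories of sheaves of left $f^\sharp A$-modules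 and of left $A$-modules form an adjoint equivalence, whose counit is $b\otimes c\otimes m\mapsto \overrightarrow{\alpha}_f(b\otimes c)\,m$ and the inverse of whose unit is $c\otimes b\otimes m\mapsto\overleftarrow{\alpha}_f(c\otimes b)\,m$. -/

import Mathlib

open CategoryTheory TopologicalSpace MulOpposite
open scoped TensorProduct

universe u

set_option linter.unusedSectionVars false

noncomputable section

/-! ### Tensor products over a noncommutative ring -/

section BalancedTensor

variable (S : Type*) [Ring S] (N M : Type*) [AddCommGroup N] [AddCommGroup M]
  [Module Sᵐᵒᵖ N] [Module S M]

/-- The subgroup of `N ⊗_ℤ M` generated by the elements `n s ⊗ m - n ⊗ s m`. -/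
def balancedRel : AddSubgroup (N ⊗[ℤ] M) :=
  AddSubgroup.closure {t | ∃ (n : N) (s : S) (m : M), t = (op s • n) ⊗ₜ m - n ⊗ₜ (s • m)}

/-- The tensor product `N ⊗_S M` of a right `S`-module `N` and a left `S`-module `M`. -/
def BalancedTensor : Type _ := (N ⊗[ℤ] M) ⧸ balancedRel S N M

instance : AddCommGroup (BalancedTensor S N M) :=
  inferInstanceAs (AddCommGroup ((N ⊗[ℤ] M) ⧸ balancedRel S N M))

namespace BalancedTensor

variable {N M}

/-- The pure tensor `n ⊗ m`. -/
def tmul (n : N) (m : M) : BalancedTensor S N M := QuotientAddGroup.mk (n ⊗ₜ[ℤ] m)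

theorem add_tmul (n n' : N) (m : M) : tmul S (n + n') m = tmul S n m + tmul S n' m := by
  unfold tmul; rw [TensorProduct.add_tmul]; rfl

theorem tmul_add (n : N) (m m' : M) : tmul S n (m + m') = tmul S n m + tmul S n m' := by
  unfold tmul; rw [TensorProduct.tmul_add]; rfl

theorem smul_tmul (n : N) (s : S) (m : M) : tmul S (op s • n) m = tmul S n (s • m) := by
  refine (QuotientAddGroup.eq_iff_sub_mem).2 ?_
  exact AddSubgroup.subset_closure ⟨n, s, m, rfl⟩

variable {S}

theorem induction {C : BalancedTensor S N M → Prop} (h0 : C 0)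
    (ht : ∀ n m, C (tmul S n m)) (ha : ∀ x y, C x → C y → C (x + y)) (x) : C x := by
  obtain ⟨x, rfl⟩ := QuotientAddGroup.mk_surjective x
  induction x using TensorProduct.induction_on with
  | zero => exact h0
  | tmul n m => exact ht n m
  | add x y hx hy => exact ha _ _ hx hy

variable {P : Type*} [AddCommGroup P]

/-- The additive map on `N ⊗_S M` induced by a balanced biadditive map. -/
def lift (φ : N →+ M →+ P) (h : ∀ n (s : S) m, φ (op s • n) m = φ n (s • m)) :
    BalancedTensor S N M →+ P :=
  QuotientAddGroup.lift _
    (TensorProduct.liftAddHom φ (fun r n m => by simp)) (by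
      rw [balancedRel, AddSubgroup.closure_le]
      rintro _ ⟨n, s, m, rfl⟩
      simp [h])

@[simp] theorem lift_tmul (φ : N →+ M →+ P) (h : ∀ n (s : S) m, φ (op s • n) m = φ n (s • m))
    (n : N) (m : M) : lift φ h (tmul S n m) = φ n m := rfl

theorem hom_ext {f g : BalancedTensor S N M →+ P}
    (h : ∀ n m, f (tmul S n m) = g (tmul S n m)) : f = g := by
  ext x
  induction x using induction with
  | h0 => simp
  | ht n m => exact h n m
  | ha x y hx hy => simp [hx, hy]

/-- Functoriality of `N ⊗_S M` in `S`, `N` and `M`. -/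
def map {S' : Type*} [Ring S'] {N' M' : Type*} [AddCommGroup N'] [AddCommGroup M']
    [Module S'ᵐᵒᵖ N'] [Module S' M'] (σ : S →+* S') (g : N →+ N') (h : M →+ M')
    (hg : ∀ (s : S) n, g (op s • n) = op (σ s) • g n) (hh : ∀ (s : S) m, h (s • m) = σ s • h m) :
    BalancedTensor S N M →+ BalancedTensor S' N' M' :=
  lift (AddMonoidHom.mk' (fun n => AddMonoidHom.mk' (fun m => tmul S' (g n) (h m))
      (fun m m' => by rw [map_add, tmul_add]))
      (fun n n' => by ext m; exact (by rw [map_add]; exact add_tmul _ _ _ _ :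
        tmul S' (g (n + n')) (h m) = tmul S' (g n) (h m) + tmul S' (g n') (h m))))
    (fun n s m => by
      change tmul S' (g (op s • n)) (h m) = tmul S' (g n) (h (s • m))
      rw [hg, hh, smul_tmul])

@[simp] theorem map_tmul {S' : Type*} [Ring S'] {N' M' : Type*} [AddCommGroup N']
    [AddCommGroup M'] [Module S'ᵐᵒᵖ N'] [Module S' M'] (σ : S →+* S') (g : N →+ N') (h : M →+ M')
    (hg : ∀ (s : S) n, g (op s • n) = op (σ s) • g n) (hh : ∀ (s : S) m, h (s • m) = σ s • h m)
    (n : N) (m : M) : map σ g h hg hh (tmul S n m) = tmul S' (g n) (h m) := rfl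

variable (S N M)

/-- The left action on `N ⊗_S M` given by a left action on `N` commuting with that of `S`. -/
@[reducible]
def leftModule (R : Type*) [Ring R] [Module R N] [SMulCommClass R Sᵐᵒᵖ N] :
    Module R (BalancedTensor S N M) :=
  Module.compHom _ (
    { toFun := fun r => map (RingHom.id S) (DistribSMul.toAddMonoidHom N r)
        (AddMonoidHom.id M) (fun s n => smul_comm r (op s) n) (fun _ _ => rfl)
      map_one' := hom_ext fun n m => by
        change tmul S ((1 : R) • n) m = tmul S n m
        rw [one_smul]
      map_mul' := fun r r' => hom_ext fun n m => by
        change tmul S ((r * r') • n) m = tmul S (r • r' • n) m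
        rw [mul_smul]
      map_zero' := hom_ext fun n m => by
        change tmul S ((0 : R) • n) m = 0
        have := add_tmul S (0 : N) 0 m
        rw [zero_smul]
        simpa using this
      map_add' := fun r r' => hom_ext fun n m => by
        change tmul S ((r + r') • n) m = tmul S (r • n) m + tmul S (r' • n) m
        rw [add_smul, add_tmul] } :
    R →+* AddMonoid.End (BalancedTensor S N M))

/-- The right action on `N ⊗_S M` given by a right action on `M` commuting with that of `S`. -/
@[reducible]
def rightModule (R : Type*) [Ring R] [Module R M] [SMulCommClass R S M] :
    Module R (BalancedTensor S N M) :=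
  Module.compHom _ (
    { toFun := fun r => map (RingHom.id S) (AddMonoidHom.id N)
        (DistribSMul.toAddMonoidHom M r) (fun _ _ => rfl) (fun s m => smul_comm r s m)
      map_one' := hom_ext fun n m => by
        change tmul S n ((1 : R) • m) = tmul S n m
        rw [one_smul]
      map_mul' := fun r r' => hom_ext fun n m => by
        change tmul S n ((r * r') • m) = tmul S n (r • r' • m)
        rw [mul_smul]
      map_zero' := hom_ext fun n m => by
        change tmul S n ((0 : R) • m) = 0
        have := tmul_add S n (0 : M) 0
        rw [zero_smul]
        simpa using this
      map_add' := fun r r' => hom_ext fun n m => by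
        change tmul S n ((r + r') • m) = tmul S n (r • m) + tmul S n (r' • m)
        rw [add_smul, tmul_add] } :
    R →+* AddMonoid.End (BalancedTensor S N M))

variable {S N M}

theorem map_left_smul {S' : Type*} [Ring S'] {N' M' : Type*} [AddCommGroup N']
    [AddCommGroup M'] [Module S'ᵐᵒᵖ N'] [Module S' M'] (σ : S →+* S') (g : N →+ N') (h : M →+ M')
    (hg : ∀ (s : S) n, g (op s • n) = op (σ s) • g n) (hh : ∀ (s : S) m, h (s • m) = σ s • h m)
    {R R' : Type*} [Ring R] [Module R N] [SMulCommClass R Sᵐᵒᵖ N]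
    [Ring R'] [Module R' N'] [SMulCommClass R' S'ᵐᵒᵖ N']
    (r : R) (r' : R') (hr : ∀ n, g (r • n) = r' • g n) (x : BalancedTensor S N M) :
    letI := leftModule S N M R
    letI := leftModule S' N' M' R'
    map σ g h hg hh (r • x) = r' • map σ g h hg hh x := by
  let _ := leftModule S N M R
  let _ := leftModule S' N' M' R'
  induction x using induction with
  | h0 => rw [smul_zero, map_zero, smul_zero]
  | ht n m => exact congrArg (fun t => tmul S' t (h m)) (hr n)
  | ha x y hx hy => rw [smul_add, map_add, map_add, smul_add, hx, hy]

theorem map_right_smul {S' : Type*} [Ring S'] {N' M' : Type*} [AddCommGroup N']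
    [AddCommGroup M'] [Module S'ᵐᵒᵖ N'] [Module S' M'] (σ : S →+* S') (g : N →+ N') (h : M →+ M')
    (hg : ∀ (s : S) n, g (op s • n) = op (σ s) • g n) (hh : ∀ (s : S) m, h (s • m) = σ s • h m)
    {R R' : Type*} [Ring R] [Module R M] [SMulCommClass R S M]
    [Ring R'] [Module R' M'] [SMulCommClass R' S' M']
    (r : R) (r' : R') (hr : ∀ m, h (r • m) = r' • h m) (x : BalancedTensor S N M) :
    letI := rightModule S N M R
    letI := rightModule S' N' M' R'
    map σ g h hg hh (r • x) = r' • map σ g h hg hh x := by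
  let _ := rightModule S N M R
  let _ := rightModule S' N' M' R'
  induction x using induction with
  | h0 => rw [smul_zero, map_zero, smul_zero]
  | ht n m => exact congrArg (fun t => tmul S' (g n) t) (hr m)
  | ha x y hx hy => rw [smul_add, map_add, map_add, smul_add, hx, hy]

theorem lift_left_smul (φ : N →+ M →+ P) (h : ∀ n (s : S) m, φ (op s • n) m = φ n (s • m))
    {R R' : Type*} [Ring R] [Module R N] [SMulCommClass R Sᵐᵒᵖ N] [Ring R'] [Module R' P]
    (r : R) (r' : R') (hr : ∀ n m, φ (r • n) m = r' • φ n m) (x : BalancedTensor S N M) :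
    letI := leftModule S N M R
    lift φ h (r • x) = r' • lift φ h x := by
  let _ := leftModule S N M R
  induction x using induction with
  | h0 => rw [smul_zero, map_zero, smul_zero]
  | ht n m => exact hr n m
  | ha x y hx hy => rw [smul_add, map_add, map_add, smul_add, hx, hy]

theorem lift_right_smul (φ : N →+ M →+ P) (h : ∀ n (s : S) m, φ (op s • n) m = φ n (s • m))
    {R R' : Type*} [Ring R] [Module R M] [SMulCommClass R S M] [Ring R'] [Module R' P]
    (r : R) (r' : R') (hr : ∀ n m, φ n (r • m) = r' • φ n m) (x : BalancedTensor S N M) :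
    letI := rightModule S N M R
    lift φ h (r • x) = r' • lift φ h x := by
  let _ := rightModule S N M R
  induction x using induction with
  | h0 => rw [smul_zero, map_zero, smul_zero]
  | ht n m => exact hr n m
  | ha x y hx hy => rw [smul_add, map_add, map_add, smul_add, hx, hy]

theorem left_right_smul {R R' : Type*} [Ring R] [Module R N] [SMulCommClass R Sᵐᵒᵖ N]
    [Ring R'] [Module R' M] [SMulCommClass R' S M]
    (r : R) (r' : R') (x : BalancedTensor S N M) :
    (leftModule S N M R).smul r ((rightModule S N M R').smul r' x) =
      (rightModule S N M R').smul r' ((leftModule S N M R).smul r x) := by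
  let _ := leftModule S N M R
  let _ := rightModule S N M R'
  change r • r' • x = r' • r • x
  induction x using induction with
  | h0 => simp only [smul_zero]
  | ht n m => rfl
  | ha x y hx hy => simp only [smul_add, hx, hy]

theorem left_eq_right_smul {R R' : Type*} [Ring R] [Module R N] [SMulCommClass R Sᵐᵒᵖ N]
    [Ring R'] [Module R' M] [SMulCommClass R' S M] (r : R) (s : S) (r' : R')
    (h : ∀ n : N, r • n = op s • n) (h' : ∀ m : M, s • m = r' • m) (x : BalancedTensor S N M) :
    (leftModule S N M R).smul r x = (rightModule S N M R').smul r' x := by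
  let _ := leftModule S N M R
  let _ := rightModule S N M R'
  change r • x = r' • x
  induction x using induction with
  | h0 => simp only [smul_zero]
  | ht n m =>
    change tmul S (r • n) m = tmul S n (r' • m)
    rw [h, smul_tmul, h']
  | ha x y hx hy => simp only [smul_add, hx, hy]

end BalancedTensor

end BalancedTensor
/-! ### Sheaves of algebras and bimodules -/

/-- The site of open subsets of `X`. -/
abbrev siteOf (X : TopCat.{u}) : GrothendieckTopology (Opens X) := Opens.grothendieckTopology X

/-- A sheaf of associative unital `K`-algebras on `X`. -/
structure SheafAlgebra {X : TopCat.{u}} (K : Sheaf (siteOf X) CommRingCat.{u}) where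
  /-- the underlying sheaf of rings -/
  ring : Sheaf (siteOf X) RingCat.{u}
  /-- the structure morphism `K → A` -/
  unit (U : (Opens X)ᵒᵖ) : K.obj.obj U →+* ring.obj.obj U
  map_unit {U V : (Opens X)ᵒᵖ} (g : U ⟶ V) (k : K.obj.obj U) :
    ring.obj.map g (unit U k) = unit V (K.obj.map g k)
  commutes (U : (Opens X)ᵒᵖ) (k : K.obj.obj U) (a : ring.obj.obj U) :
    unit U k * a = a * unit U k

/-- A sheaf of `A ⊗_K B^op`-modules, i.e. an `(A, B)`-bimodule on which the two actions of `K`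
agree.  The right action of `B` is written as a left action of the opposite ring. -/
structure Bimodule {X : TopCat.{u}} {K : Sheaf (siteOf X) CommRingCat.{u}}
    (A B : SheafAlgebra K) where
  /-- the underlying sheaf of abelian groups -/
  carrier : Sheaf (siteOf X) AddCommGrpCat.{u}
  [left (U : (Opens X)ᵒᵖ) : Module (A.ring.obj.obj U) (carrier.obj.obj U)]
  [right (U : (Opens X)ᵒᵖ) : Module (B.ring.obj.obj U)ᵐᵒᵖ (carrier.obj.obj U)]
  smul_comm (U : (Opens X)ᵒᵖ) (a : A.ring.obj.obj U) (b : (B.ring.obj.obj U)ᵐᵒᵖ)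
    (m : carrier.obj.obj U) : a • b • m = b • a • m
  map_smul {U V : (Opens X)ᵒᵖ} (g : U ⟶ V) (a : A.ring.obj.obj U) (m : carrier.obj.obj U) :
    carrier.obj.map g (a • m) = A.ring.obj.map g a • carrier.obj.map g m
  map_op_smul {U V : (Opens X)ᵒᵖ} (g : U ⟶ V) (b : B.ring.obj.obj U) (m : carrier.obj.obj U) :
    carrier.obj.map g (op b • m) = op (B.ring.obj.map g b) • carrier.obj.map g m
  central (U : (Opens X)ᵒᵖ) (k : K.obj.obj U) (m : carrier.obj.obj U) :
    A.unit U k • m = op (B.unit U k) • m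

attribute [instance] Bimodule.left Bimodule.right

section

variable {X : TopCat.{u}} {K : Sheaf (siteOf X) CommRingCat.{u}}

/-- The sheaf of opposite rings of `A`. -/
def SheafAlgebra.opRing (A : SheafAlgebra K) : Sheaf (siteOf X) RingCat.{u} where
  obj :=
    { obj := fun U => RingCat.of (A.ring.obj.obj U)ᵐᵒᵖ
      map := fun g => RingCat.ofHom (RingHom.op (A.ring.obj.map g).hom)
      map_id := fun U => by ext x; simp
      map_comp := fun g h => by ext x; simp }
  property := by
    rw [Presheaf.isSheaf_iff_isSheaf_forget _ _ (forget RingCat)]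
    have h := (Presheaf.isSheaf_iff_isSheaf_forget _ _ (forget RingCat)).1 A.ring.property
    refine Presheaf.isSheaf_of_iso_iff (NatIso.ofComponents
      (fun U => (opEquiv (α := A.ring.obj.obj U)).toIso) ?_) |>.1 h
    intro U V g
    rfl

namespace Bimodule

variable {A B C : SheafAlgebra K}

instance (P : Bimodule A B) (U : (Opens X)ᵒᵖ) :
    SMulCommClass (A.ring.obj.obj U) (B.ring.obj.obj U)ᵐᵒᵖ (P.carrier.obj.obj U) :=
  ⟨P.smul_comm U⟩

instance (P : Bimodule A B) (U : (Opens X)ᵒᵖ) :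
    SMulCommClass (B.ring.obj.obj U)ᵐᵒᵖ (A.ring.obj.obj U) (P.carrier.obj.obj U) :=
  ⟨fun b a m => (P.smul_comm U a b m).symm⟩

/-- Morphisms of bimodules: morphisms of sheaves linear for both actions. -/
@[ext]
structure Hom (P Q : Bimodule A B) where
  /-- the underlying morphism of sheaves of abelian groups -/
  hom : P.carrier ⟶ Q.carrier
  map_smul (U : (Opens X)ᵒᵖ) (a : A.ring.obj.obj U) (m : P.carrier.obj.obj U) :
    hom.hom.app U (a • m) = a • hom.hom.app U m
  map_op_smul (U : (Opens X)ᵒᵖ) (b : B.ring.obj.obj U) (m : P.carrier.obj.obj U) :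
    hom.hom.app U (op b • m) = op b • hom.hom.app U m

instance : Category (Bimodule A B) where
  Hom := Hom
  id P := ⟨𝟙 _, fun _ _ _ => rfl, fun _ _ _ => rfl⟩
  comp f g := ⟨f.hom ≫ g.hom,
    fun U a m => (congrArg _ (f.map_smul U a m)).trans (g.map_smul U a _),
    fun U a m => (congrArg _ (f.map_op_smul U a m)).trans (g.map_op_smul U a _)⟩

/-- `A` as a bimodule over itself. -/
def regular (A : SheafAlgebra K) : Bimodule A A where
  carrier := (sheafCompose (siteOf X) (forget₂ RingCat.{u} AddCommGrpCat.{u})).obj A.ring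
  left U := inferInstanceAs (Module (A.ring.obj.obj U) (A.ring.obj.obj U))
  right U := inferInstanceAs (Module (A.ring.obj.obj U)ᵐᵒᵖ (A.ring.obj.obj U))
  smul_comm U a b m := (mul_assoc (G := A.ring.obj.obj U) a m b.unop).symm
  map_smul g a m := map_mul (M := A.ring.obj.obj _) (A.ring.obj.map g).hom a m
  map_op_smul g b m := map_mul (M := A.ring.obj.obj _) (A.ring.obj.map g).hom m b
  central U k m := A.commutes U k m

/-- The underlying sheaf of left modules of a bimodule. -/
def leftModule (P : Bimodule A B) : SheafOfModules.{u} A.ring where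
  val := PresheafOfModules.ofPresheaf P.carrier.obj (fun _ _ g a m => P.map_smul g a m)
  isSheaf := P.carrier.property

/-- The presheaf `U ↦ P(U) ⊗_{B(U)} M(U)` for a bimodule `P` and a left `B`-module `M`. -/
def tensorPresheaf (P : Bimodule A B) (M : PresheafOfModules.{u} B.ring.obj) :
    (Opens X)ᵒᵖ ⥤ AddCommGrpCat.{u} where
  obj U := AddCommGrpCat.of (BalancedTensor (B.ring.obj.obj U) (P.carrier.obj.obj U) (M.obj U))
  map {U V} g := AddCommGrpCat.ofHom (BalancedTensor.map (B.ring.obj.map g).hom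
    (P.carrier.obj.map g).hom (M.presheaf.map g).hom
    (fun s n => P.map_op_smul g s n) (fun s m => M.map_smul g s m))
  map_id U := by
    refine AddCommGrpCat.hom_ext (BalancedTensor.hom_ext fun n m => ?_)
    change BalancedTensor.tmul _ (P.carrier.obj.map (𝟙 U) n) (M.presheaf.map (𝟙 U) m) =
      BalancedTensor.tmul _ n m
    rw [CategoryTheory.Functor.map_id, CategoryTheory.Functor.map_id]
    rfl
  map_comp {U V W} g h := by
    refine AddCommGrpCat.hom_ext (BalancedTensor.hom_ext fun n m => ?_)
    change BalancedTensor.tmul _ (P.carrier.obj.map (g ≫ h) n) (M.presheaf.map (g ≫ h) m) =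
      BalancedTensor.tmul _ (P.carrier.obj.map h (P.carrier.obj.map g n))
        (M.presheaf.map h (M.presheaf.map g m))
    rw [CategoryTheory.Functor.map_comp, CategoryTheory.Functor.map_comp]
    rfl

/-- The presheaf `P ⊗_B M` with its left action of `A`. -/
def tensorLeft (P : Bimodule A B) (M : PresheafOfModules.{u} B.ring.obj) :
    PresheafOfModules.{u} A.ring.obj :=
  letI (U : (Opens X)ᵒᵖ) : Module (A.ring.obj.obj U) ((P.tensorPresheaf M).obj U) :=
    BalancedTensor.leftModule (B.ring.obj.obj U) (P.carrier.obj.obj U) (M.obj U)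
      (A.ring.obj.obj U)
  PresheafOfModules.ofPresheaf (P.tensorPresheaf M) (fun _ _ g a x =>
    BalancedTensor.map_left_smul (B.ring.obj.map g).hom (P.carrier.obj.map g).hom
      (M.presheaf.map g).hom (fun s n => P.map_op_smul g s n) (fun s m => M.map_smul g s m)
      a (A.ring.obj.map g a) (P.map_smul g a) x)

/-- The presheaf `P ⊗_B Q` with its right action of `C`. -/
def tensorRight (P : Bimodule A B) (Q : Bimodule B C) : PresheafOfModules.{u} C.opRing.obj :=
  letI (U : (Opens X)ᵒᵖ) : Module (C.opRing.obj.obj U)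
      ((P.tensorPresheaf Q.leftModule.val).obj U) :=
    BalancedTensor.rightModule (B.ring.obj.obj U) (P.carrier.obj.obj U) (Q.carrier.obj.obj U)
      (C.ring.obj.obj U)ᵐᵒᵖ
  PresheafOfModules.ofPresheaf (P.tensorPresheaf Q.leftModule.val) (fun U V g c x =>
    BalancedTensor.map_right_smul (R := (C.ring.obj.obj U)ᵐᵒᵖ) (R' := (C.ring.obj.obj V)ᵐᵒᵖ)
      (B.ring.obj.map g).hom (P.carrier.obj.map g).hom (Q.carrier.obj.map g).hom
      (fun s n => P.map_op_smul g s n) (fun s m => Q.map_smul g s m)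
      c (op (C.ring.obj.map g (unop c))) (Q.map_op_smul g (unop c)) x)

/-- The map `P(U) ⊗ M(U) → P(U) ⊗ M'(U)` induced by a morphism `M → M'`. -/
def tensorMap (P : Bimodule A B) {M M' : PresheafOfModules.{u} B.ring.obj} (φ : M ⟶ M')
    (U : (Opens X)ᵒᵖ) :
    BalancedTensor (B.ring.obj.obj U) (P.carrier.obj.obj U) (M.obj U) →+
      BalancedTensor (B.ring.obj.obj U) (P.carrier.obj.obj U) (M'.obj U) :=
  BalancedTensor.map (RingHom.id _) (AddMonoidHom.id _) (φ.app U).hom.toAddMonoidHom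
    (fun _ _ => rfl) (fun s m => (φ.app U).hom.map_smul s m)

/-- The presheaf tensor product `M ↦ P ⊗_B M` as a functor. -/
def tensorLeftFunctor (P : Bimodule A B) :
    PresheafOfModules.{u} B.ring.obj ⥤ PresheafOfModules.{u} A.ring.obj where
  obj M := P.tensorLeft M
  map {M M'} φ := PresheafOfModules.homMk (M₁ := P.tensorLeft M) (M₂ := P.tensorLeft M')
    { app := fun U => AddCommGrpCat.ofHom (P.tensorMap φ U)
      naturality := fun U V g => AddCommGrpCat.hom_ext (BalancedTensor.hom_ext fun n m =>
        congrArg (BalancedTensor.tmul _ (P.carrier.obj.map g n))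
          (PresheafOfModules.naturality_apply φ g m)) }
    (fun U a x => BalancedTensor.map_left_smul (R := A.ring.obj.obj U) (R' := A.ring.obj.obj U)
      (RingHom.id _) (AddMonoidHom.id (P.carrier.obj.obj U)) (φ.app U).hom.toAddMonoidHom
      (fun _ _ => rfl) (fun s m => (φ.app U).hom.map_smul s m) a a (fun _ => rfl) x)
  map_id M := by
    refine PresheafOfModules.hom_ext fun U => ModuleCat.hom_ext (LinearMap.ext fun x => ?_)
    exact DFunLike.congr_fun (BalancedTensor.hom_ext (S := B.ring.obj.obj U)
      (f := P.tensorMap (𝟙 M) U) (g := AddMonoidHom.id _) fun n m => rfl) x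
  map_comp {M M' M''} φ ψ := by
    refine PresheafOfModules.hom_ext fun U => ModuleCat.hom_ext (LinearMap.ext fun x => ?_)
    exact DFunLike.congr_fun (BalancedTensor.hom_ext (S := B.ring.obj.obj U)
      (f := P.tensorMap (φ ≫ ψ) U) (g := (P.tensorMap ψ U).comp (P.tensorMap φ U))
      fun n m => rfl) x

/-- The functor `M ↦ P ⊗_B M` from sheaves of left `B`-modules to sheaves of left `A`-modules:
the sheafification of `U ↦ P(U) ⊗_{B(U)} M(U)`. -/
def tensorFunctor (P : Bimodule A B) : SheafOfModules.{u} B.ring ⥤ SheafOfModules.{u} A.ring :=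
  SheafOfModules.forget B.ring ⋙ P.tensorLeftFunctor ⋙
    PresheafOfModules.sheafification (𝟙 A.ring.obj)

/-- The section `b ⊗ m` of `P ⊗_B M`. -/
def tmul (P : Bimodule A B) (M : SheafOfModules.{u} B.ring) {U : (Opens X)ᵒᵖ}
    (b : P.carrier.obj.obj U) (m : M.val.obj U) : (P.tensorFunctor.obj M).val.obj U :=
  (CategoryTheory.toSheafify (siteOf X) (P.tensorPresheaf M.val)).app U
    (BalancedTensor.tmul (B.ring.obj.obj U) b m)

/-- The underlying sheaf of abelian groups of `P ⊗_B Q`. -/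
def tensorSheaf (P : Bimodule A B) (Q : Bimodule B C) : Sheaf (siteOf X) AddCommGrpCat.{u} :=
  (presheafToSheaf (siteOf X) AddCommGrpCat.{u}).obj (P.tensorPresheaf Q.leftModule.val)

/-- The canonical map from the presheaf tensor product to its sheafification. -/
def toTensorSheaf (P : Bimodule A B) (Q : Bimodule B C) :
    P.tensorPresheaf Q.leftModule.val ⟶ (P.tensorSheaf Q).obj :=
  CategoryTheory.toSheafify (siteOf X) (P.tensorPresheaf Q.leftModule.val)

instance (P : Bimodule A B) (Q : Bimodule B C) :
    Presheaf.IsLocallyInjective (siteOf X) (P.toTensorSheaf Q) :=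
  inferInstanceAs (Presheaf.IsLocallyInjective (siteOf X)
    (CategoryTheory.toSheafify (siteOf X) (P.tensorPresheaf Q.leftModule.val)))

instance (P : Bimodule A B) (Q : Bimodule B C) :
    Presheaf.IsLocallySurjective (siteOf X) (P.toTensorSheaf Q) :=
  inferInstanceAs (Presheaf.IsLocallySurjective (siteOf X)
    (CategoryTheory.toSheafify (siteOf X) (P.tensorPresheaf Q.leftModule.val)))

/-- `toTensorSheaf`, on the presheaf of left modules. -/
def toTensorLeft (P : Bimodule A B) (Q : Bimodule B C) :
    (P.tensorLeft Q.leftModule.val).presheaf ⟶ (P.tensorSheaf Q).obj :=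
  P.toTensorSheaf Q

instance (P : Bimodule A B) (Q : Bimodule B C) :
    Presheaf.IsLocallyInjective (siteOf X) (P.toTensorLeft Q) :=
  inferInstanceAs (Presheaf.IsLocallyInjective (siteOf X) (P.toTensorSheaf Q))

instance (P : Bimodule A B) (Q : Bimodule B C) :
    Presheaf.IsLocallySurjective (siteOf X) (P.toTensorLeft Q) :=
  inferInstanceAs (Presheaf.IsLocallySurjective (siteOf X) (P.toTensorSheaf Q))

/-- `toTensorSheaf`, on the presheaf of right modules. -/
def toTensorRight (P : Bimodule A B) (Q : Bimodule B C) :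
    (P.tensorRight Q).presheaf ⟶ (P.tensorSheaf Q).obj :=
  P.toTensorSheaf Q

instance (P : Bimodule A B) (Q : Bimodule B C) :
    Presheaf.IsLocallyInjective (siteOf X) (P.toTensorRight Q) :=
  inferInstanceAs (Presheaf.IsLocallyInjective (siteOf X) (P.toTensorSheaf Q))

instance (P : Bimodule A B) (Q : Bimodule B C) :
    Presheaf.IsLocallySurjective (siteOf X) (P.toTensorRight Q) :=
  inferInstanceAs (Presheaf.IsLocallySurjective (siteOf X) (P.toTensorSheaf Q))

/-- The sheaf tensor product `P ⊗_B Q` of bimodules, with its left action of `A` and its right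
action of `C`.  Its underlying sheaf of left modules is `P.tensorFunctor.obj Q.leftModule`. -/
def tensor (P : Bimodule A B) (Q : Bimodule B C) : Bimodule A C where
  carrier := P.tensorSheaf Q
  left U := PresheafOfModules.Sheafify.module (𝟙 A.ring.obj) (P.toTensorLeft Q) U
  right U := PresheafOfModules.Sheafify.module (R := C.opRing) (𝟙 C.opRing.obj)
    (P.toTensorRight Q) U
  smul_comm U a c m := by
    let F := P.tensorSheaf Q
    let φ := P.toTensorSheaf Q
    refine F.isSeparated _ _ (Presheaf.imageSieve_mem (siteOf X) φ m) _ _ ?_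
    rintro Y f ⟨m₀, hm₀⟩
    have hl : ∀ (n : F.obj.obj U) (n₀), φ.app _ n₀ = F.obj.map f.op n → _ := fun n n₀ hn =>
      PresheafOfModules.Sheafify.map_smul_eq (𝟙 A.ring.obj) (P.toTensorLeft Q) a n f.op (A.ring.obj.map f.op a) rfl n₀ hn
    have hr : ∀ (n : F.obj.obj U) (n₀), φ.app _ n₀ = F.obj.map f.op n → _ := fun n n₀ hn =>
      PresheafOfModules.Sheafify.map_smul_eq (R := C.opRing) (𝟙 C.opRing.obj) (P.toTensorRight Q) c n f.op (C.opRing.obj.map f.op c) rfl n₀ hn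
    refine (hl _ _ (hr m m₀ hm₀).symm).trans (Eq.trans ?_ (hr _ _ (hl m m₀ hm₀).symm).symm)
    have h := BalancedTensor.left_right_smul (S := B.ring.obj.obj (Opposite.op Y))
      (N := P.carrier.obj.obj (Opposite.op Y)) (M := Q.carrier.obj.obj (Opposite.op Y))
      (R := A.ring.obj.obj (Opposite.op Y)) (R' := (C.ring.obj.obj (Opposite.op Y))ᵐᵒᵖ)
      (A.ring.obj.map f.op a) (op (C.ring.obj.map f.op (unop c)))
    exact congrArg (φ.app _) (h m₀)
  map_smul g a m := PresheafOfModules.Sheafify.map_smul (𝟙 A.ring.obj) (P.toTensorLeft Q) _ g a m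
  map_op_smul g c m := PresheafOfModules.Sheafify.map_smul (R := C.opRing) (𝟙 C.opRing.obj)
    (P.toTensorRight Q) _ g (op c) m
  central U k m := by
    let F := P.tensorSheaf Q
    let φ := P.toTensorSheaf Q
    refine F.isSeparated _ _ (Presheaf.imageSieve_mem (siteOf X) φ m) _ _ ?_
    rintro Y f ⟨m₀, hm₀⟩
    have hl := PresheafOfModules.Sheafify.map_smul_eq (𝟙 A.ring.obj) (P.toTensorLeft Q) (A.unit U k) m f.op
        (A.unit _ (K.obj.map f.op k)) (A.map_unit f.op k).symm m₀ hm₀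
    have hr := PresheafOfModules.Sheafify.map_smul_eq (R := C.opRing) (𝟙 C.opRing.obj) (P.toTensorRight Q) (op (C.unit U k)) m f.op
        (op (C.unit _ (K.obj.map f.op k))) (congrArg op (C.map_unit f.op k).symm) m₀ hm₀
    refine hl.trans (Eq.trans ?_ hr.symm)
    have h := BalancedTensor.left_eq_right_smul (S := B.ring.obj.obj (Opposite.op Y))
      (N := P.carrier.obj.obj (Opposite.op Y)) (M := Q.carrier.obj.obj (Opposite.op Y))
      (A.unit _ (K.obj.map f.op k)) (B.unit _ (K.obj.map f.op k))
      (op (C.unit _ (K.obj.map f.op k))) (P.central _ _) (Q.central _ _)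
    exact congrArg (φ.app _) (h m₀)

/-- The morphism of bimodules `P ⊗_B Q → T` induced by a family of balanced biadditive maps
`P(U) × Q(U) → T(U)`, compatible with restrictions and with both outer actions. -/
def tensorLift (P : Bimodule A B) (Q : Bimodule B C) (T : Bimodule A C)
    (β : ∀ U, P.carrier.obj.obj U →+ Q.carrier.obj.obj U →+ T.carrier.obj.obj U)
    (balanced : ∀ U n (s : B.ring.obj.obj U) m, β U (op s • n) m = β U n (s • m))
    (natural : ∀ (U V : (Opens X)ᵒᵖ) (g : U ⟶ V) n m, T.carrier.obj.map g (β U n m) =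
      β V (P.carrier.obj.map g n) (Q.carrier.obj.map g m))
    (left_linear : ∀ U (a : A.ring.obj.obj U) n m, β U (a • n) m = a • β U n m)
    (right_linear : ∀ U (c : C.ring.obj.obj U) n m, β U n (op c • m) = op c • β U n m) :
    P.tensor Q ⟶ T :=
  let β' : P.tensorPresheaf Q.leftModule.val ⟶ T.carrier.obj :=
    { app := fun U => AddCommGrpCat.ofHom (BalancedTensor.lift (β U) (balanced U))
      naturality := fun U V g => AddCommGrpCat.hom_ext (BalancedTensor.hom_ext
        (S := B.ring.obj.obj U) (M := Q.carrier.obj.obj U) fun n m => (natural U V g n m).symm) }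
  let φ := P.toTensorSheaf Q
  let ψ : (P.tensorSheaf Q).obj ⟶ T.carrier.obj := CategoryTheory.sheafifyLift (siteOf X) β' T.carrier.property
  have hψ : ∀ U x, ψ.app U (φ.app U x) = β'.app U x := fun U x =>
    ConcreteCategory.congr_hom (NatTrans.congr_app
      (CategoryTheory.toSheafify_sheafifyLift (siteOf X) β' T.carrier.property) U) x
  { hom := ⟨ψ⟩
    map_smul := fun U a m => by
      refine T.carrier.isSeparated _ _ (Presheaf.imageSieve_mem (siteOf X) φ m) _ _ ?_
      rintro Y f ⟨m₀, hm₀⟩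
      have hl := PresheafOfModules.Sheafify.map_smul_eq (𝟙 A.ring.obj) (P.toTensorLeft Q) a m f.op (A.ring.obj.map f.op a) rfl m₀ hm₀
      have h1 := NatTrans.naturality_apply ψ f.op (a • m : (P.tensor Q).carrier.obj.obj U)
      have h2 := NatTrans.naturality_apply ψ f.op m
      rw [T.map_smul]
      refine h1.symm.trans ((congrArg (ψ.app _) hl).trans ?_)
      refine Eq.trans ?_ (congrArg (fun t => A.ring.obj.map f.op a • t)
        ((congrArg (ψ.app _) hm₀).trans h2))
      rw [hψ]
      refine (hψ _ _).trans ?_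
      exact BalancedTensor.lift_left_smul (β _) (balanced _) _ _ (left_linear _ _) m₀
    map_op_smul := fun U c m => by
      refine T.carrier.isSeparated _ _ (Presheaf.imageSieve_mem (siteOf X) φ m) _ _ ?_
      rintro Y f ⟨m₀, hm₀⟩
      have hl := PresheafOfModules.Sheafify.map_smul_eq (R := C.opRing) (𝟙 C.opRing.obj) (P.toTensorRight Q) (op c) m f.op (op (C.ring.obj.map f.op c)) rfl m₀ hm₀
      have h1 := NatTrans.naturality_apply ψ f.op (op c • m : (P.tensor Q).carrier.obj.obj U)
      have h2 := NatTrans.naturality_apply ψ f.op m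
      rw [T.map_op_smul]
      refine h1.symm.trans ((congrArg (ψ.app _) hl).trans ?_)
      refine Eq.trans ?_ (congrArg (fun t => op (C.ring.obj.map f.op c) • t)
        ((congrArg (ψ.app _) hm₀).trans h2))
      rw [hψ]
      refine (hψ _ _).trans ?_
      exact BalancedTensor.lift_right_smul (M := Q.carrier.obj.obj _) (β _) (balanced _) _ _
        (right_linear _ _) m₀ }

/-- The section `b ⊗ c` of the tensor product of two bimodules. -/
def pure (P : Bimodule A B) (Q : Bimodule B C) {U : (Opens X)ᵒᵖ}
    (b : P.carrier.obj.obj U) (c : Q.carrier.obj.obj U) : (P.tensor Q).carrier.obj.obj U :=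
  P.tmul Q.leftModule b c

/-- The value `μ(b ⊗ c)`, as a section of `A`, of a bimodule morphism `μ : P ⊗_B Q → A`. -/
def evalPure {P : Bimodule A B} {Q : Bimodule B A} (μ : P.tensor Q ⟶ regular A)
    {U : (Opens X)ᵒᵖ} (b : P.carrier.obj.obj U) (c : Q.carrier.obj.obj U) :
    A.ring.obj.obj U :=
  μ.hom.hom.app U (pure P Q b c)

/-- The bimodules `P`, `Q` and the bimodule morphisms `μ : P ⊗_B Q → A`, `ν : Q ⊗_A P → B`
implement a Morita equivalence between `B` and `A`: `μ` and `ν` are isomorphisms, and the functors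
`P ⊗_B -` and `Q ⊗_A -` form an equivalence of the categories of modules whose unit and counit are
given by `ν` and `μ`, that is by `c ⊗ b ⊗ m ↦ ν(c ⊗ b) m` and `b ⊗ c ⊗ m ↦ μ(b ⊗ c) m`. -/
structure IsMoritaEquivalence (P : Bimodule A B) (Q : Bimodule B A)
    (μ : P.tensor Q ⟶ regular A) (ν : Q.tensor P ⟶ regular B) : Prop where
  isIso_fwd : IsIso μ
  isIso_bwd : IsIso ν
  equivalence : ∃ (η : 𝟭 (SheafOfModules.{u} B.ring) ≅ P.tensorFunctor ⋙ Q.tensorFunctor)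
    (ε : Q.tensorFunctor ⋙ P.tensorFunctor ≅ 𝟭 (SheafOfModules.{u} A.ring)),
    (∀ M, P.tensorFunctor.map (η.hom.app M) ≫ ε.hom.app (P.tensorFunctor.obj M) = 𝟙 _) ∧
    (∀ (M : SheafOfModules.{u} B.ring) (U : (Opens X)ᵒᵖ) (c : Q.carrier.obj.obj U)
      (b : P.carrier.obj.obj U) (m : M.val.obj U),
      (η.inv.app M).val.app U (Q.tmul (P.tensorFunctor.obj M) c (P.tmul M b m)) =
        evalPure ν c b • m) ∧
    (∀ (M : SheafOfModules.{u} A.ring) (U : (Opens X)ᵒᵖ) (b : P.carrier.obj.obj U)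
      (c : Q.carrier.obj.obj U) (m : M.val.obj U),
      (ε.hom.app M).val.app U (P.tmul (Q.tensorFunctor.obj M) b (Q.tmul M c m)) =
        evalPure μ b c • m)

end Bimodule

end

/-! ### Matrix algebras -/

/-- The sheaf `K`, as a sheaf of rings. -/
abbrev toRingSheaf {X : TopCat.{u}} (K : Sheaf (siteOf X) CommRingCat.{u}) :
    Sheaf (siteOf X) RingCat.{u} :=
  (sheafCompose (siteOf X) (forget₂ CommRingCat.{u} RingCat.{u})).obj K

/-- A matrix `K`-algebra `A = ⊕_{i,j=0}^q A_{ij}`, given by its entries: sheaves of `K`-modules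
`A_{ij}` with associative `K`-bilinear products `A_{ij} ⊗ A_{jl} → A_{il}` and sections `1_i` of
`A_{ii}` which act as units on all `A_{ij}` and `A_{ji}`.  The sheaf of `K`-algebras
`⊕_{i,j} A_{ij}`, with the matrix product, is `MatrixAlgebra.toAlgebra` below. -/
structure MatrixAlgebra {X : TopCat.{u}} (K : Sheaf (siteOf X) CommRingCat.{u}) (q : ℕ) where
  /-- the sheaf of `K`-modules `A_{ij}` -/
  entry (i j : Fin (q + 1)) : SheafOfModules.{u} (toRingSheaf K)
  /-- the product `A_{ij} × A_{jl} → A_{il}` -/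
  mul {i j l : Fin (q + 1)} (U : (Opens X)ᵒᵖ) :
    (entry i j).val.obj U →+ (entry j l).val.obj U →+ (entry i l).val.obj U
  smul_mul {i j l : Fin (q + 1)} (U : (Opens X)ᵒᵖ) (k : (toRingSheaf K).obj.obj U)
    (x : (entry i j).val.obj U) (y : (entry j l).val.obj U) :
    mul U (k • x) y = k • mul U x y
  mul_smul {i j l : Fin (q + 1)} (U : (Opens X)ᵒᵖ) (k : (toRingSheaf K).obj.obj U)
    (x : (entry i j).val.obj U) (y : (entry j l).val.obj U) :
    mul U x (k • y) = k • mul U x y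
  map_mul {i j l : Fin (q + 1)} {U V : (Opens X)ᵒᵖ} (g : U ⟶ V)
    (x : (entry i j).val.obj U) (y : (entry j l).val.obj U) :
    (entry i l).val.presheaf.map g (mul U x y) =
      mul V ((entry i j).val.presheaf.map g x) ((entry j l).val.presheaf.map g y)
  mul_assoc {i j l r : Fin (q + 1)} (U : (Opens X)ᵒᵖ) (x : (entry i j).val.obj U)
    (y : (entry j l).val.obj U) (z : (entry l r).val.obj U) :
    mul U (mul U x y) z = mul U x (mul U y z)
  /-- the unit of `A_{ii}` -/
  one (i : Fin (q + 1)) (U : (Opens X)ᵒᵖ) : (entry i i).val.obj U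
  map_one (i : Fin (q + 1)) {U V : (Opens X)ᵒᵖ} (g : U ⟶ V) :
    (entry i i).val.presheaf.map g (one i U) = one i V
  one_mul {i j : Fin (q + 1)} (U : (Opens X)ᵒᵖ) (x : (entry i j).val.obj U) :
    mul U (one i U) x = x
  mul_one {i j : Fin (q + 1)} (U : (Opens X)ᵒᵖ) (x : (entry i j).val.obj U) :
    mul U x (one j U) = x

namespace MatrixAlgebra

variable {X : TopCat.{u}} {K : Sheaf (siteOf X) CommRingCat.{u}} {q : ℕ}

section Rect

variable (A : MatrixAlgebra K q) {m n p o : ℕ} (r : Fin m → Fin (q + 1))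
  (s : Fin n → Fin (q + 1)) (t : Fin p → Fin (q + 1)) (v : Fin o → Fin (q + 1))

/-- Sections over `U` of `⊕_{i,j} A_{r(i) s(j)}`: matrices with `(i,j)` entry in
`A_{r(i) s(j)}(U)`. -/
def Rect (U : (Opens X)ᵒᵖ) : Type u :=
  ∀ (i : Fin m) (j : Fin n), (A.entry (r i) (s j)).val.obj U

instance (U : (Opens X)ᵒᵖ) : AddCommGroup (A.Rect r s U) :=
  inferInstanceAs (AddCommGroup (∀ (i : Fin m) (j : Fin n), (A.entry (r i) (s j)).val.obj U))

variable {A r s t v}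

@[ext] theorem Rect.ext {U : (Opens X)ᵒᵖ} {x y : A.Rect r s U} (h : ∀ i j, x i j = y i j) :
    x = y := funext fun i => funext (h i)

@[simp] theorem Rect.add_apply {U : (Opens X)ᵒᵖ} (x y : A.Rect r s U) (i j) :
    (x + y) i j = x i j + y i j := rfl

@[simp] theorem Rect.zero_apply {U : (Opens X)ᵒᵖ} (i j) : (0 : A.Rect r s U) i j = 0 := rfl

/-- Matrix multiplication `(b c)_{ij} = Σ_k b_{ik} c_{kj}`. -/
def Rect.mul {U : (Opens X)ᵒᵖ} (b : A.Rect r s U) (c : A.Rect s t U) : A.Rect r t U :=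
  fun i j => ∑ k, A.mul U (b i k) (c k j)

variable (A r) in
/-- The identity matrix. -/
def Rect.one (U : (Opens X)ᵒᵖ) : A.Rect r r U := fun i => Pi.single i (A.one (r i) U)

/-- Restriction of matrices. -/
def Rect.res {U V : (Opens X)ᵒᵖ} (g : U ⟶ V) : A.Rect r s U →+ A.Rect r s V where
  toFun x := fun i j => (A.entry (r i) (s j)).val.presheaf.map g (x i j)
  map_zero' := by ext i j; exact map_zero _
  map_add' x y := by ext i j; exact map_add _ _ _

variable {U V : (Opens X)ᵒᵖ}

theorem Rect.add_mul (b b' : A.Rect r s U) (c : A.Rect s t U) :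
    (b + b').mul c = b.mul c + b'.mul c := by
  ext i j; simp [Rect.mul, Finset.sum_add_distrib]

theorem Rect.mul_add (b : A.Rect r s U) (c c' : A.Rect s t U) :
    b.mul (c + c') = b.mul c + b.mul c' := by
  ext i j; simp [Rect.mul, Finset.sum_add_distrib]

theorem Rect.mul_assoc (b : A.Rect r s U) (c : A.Rect s t U) (d : A.Rect t v U) :
    (b.mul c).mul d = b.mul (c.mul d) := by
  ext i j
  simp only [Rect.mul, map_sum, AddMonoidHom.finsetSum_apply]
  rw [Finset.sum_comm]
  simp only [A.mul_assoc]

theorem Rect.one_mul (c : A.Rect r s U) : (Rect.one A r U).mul c = c := by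
  ext i j
  rw [Rect.mul, Finset.sum_eq_single i]
  · rw [Rect.one, Pi.single_eq_same, A.one_mul]
  · intro k _ hk
    rw [Rect.one, Pi.single_eq_of_ne hk, map_zero, AddMonoidHom.zero_apply]
  · simp

theorem Rect.mul_one (c : A.Rect r s U) : c.mul (Rect.one A s U) = c := by
  ext i j
  rw [Rect.mul, Finset.sum_eq_single j]
  · rw [Rect.one, Pi.single_eq_same, A.mul_one]
  · intro k _ hk
    rw [Rect.one, Pi.single_eq_of_ne hk.symm, map_zero]
  · simp

theorem Rect.res_mul (g : U ⟶ V) (b : A.Rect r s U) (c : A.Rect s t U) :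
    Rect.res g (b.mul c) = (Rect.res g b).mul (Rect.res g c) := by
  ext i j
  exact (map_sum _ _ _).trans (Finset.sum_congr rfl fun k _ => A.map_mul g _ _)

theorem Rect.res_one (g : U ⟶ V) : Rect.res g (Rect.one A r U) = Rect.one A r V := by
  ext i j
  change (A.entry (r i) (r j)).val.presheaf.map g
    ((Pi.single i (A.one (r i) U) : ∀ j, (A.entry (r i) (r j)).val.obj U) j) =
    (Pi.single i (A.one (r i) V) : ∀ j, (A.entry (r i) (r j)).val.obj V) j
  by_cases h : j = i
  · subst h
    rw [Pi.single_eq_same, Pi.single_eq_same, A.map_one]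
  · rw [Pi.single_eq_of_ne h, Pi.single_eq_of_ne h]
    exact map_zero _

/-- Multiplication of matrices by sections of `K`. -/
instance : Module ((toRingSheaf K).obj.obj U) (A.Rect r s U) :=
  inferInstanceAs (Module ((toRingSheaf K).obj.obj U)
    (∀ (i : Fin m) (j : Fin n), (A.entry (r i) (s j)).val.obj U))

theorem Rect.smul_mul (k : (toRingSheaf K).obj.obj U) (b : A.Rect r s U) (c : A.Rect s t U) :
    (k • b).mul c = k • b.mul c := by
  ext i j
  refine (Finset.sum_congr rfl fun l _ => A.smul_mul U k (b i l) (c l j)).trans ?_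
  exact Finset.smul_sum.symm

theorem Rect.mul_smul (k : (toRingSheaf K).obj.obj U) (b : A.Rect r s U) (c : A.Rect s t U) :
    b.mul (k • c) = k • b.mul c := by
  ext i j
  refine (Finset.sum_congr rfl fun l _ => A.mul_smul U k (b i l) (c l j)).trans ?_
  exact Finset.smul_sum.symm

theorem Rect.res_smul (g : U ⟶ V) (k : (toRingSheaf K).obj.obj U) (b : A.Rect r s U) :
    Rect.res g (k • b) = (toRingSheaf K).obj.map g k • Rect.res g b := by
  ext i j
  exact (A.entry (r i) (s j)).val.map_smul g k (b i j)

theorem Rect.zero_mul (c : A.Rect s t U) : (0 : A.Rect r s U).mul c = 0 := by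
  ext i j; simp [Rect.mul]

theorem Rect.mul_zero (b : A.Rect r s U) : b.mul (0 : A.Rect s t U) = 0 := by
  ext i j; simp [Rect.mul]

instance : Ring (A.Rect r r U) :=
  { (inferInstance : AddCommGroup (A.Rect r r U)) with
    mul := Rect.mul
    one := Rect.one A r U
    left_distrib := Rect.mul_add
    right_distrib := Rect.add_mul
    zero_mul := Rect.zero_mul
    mul_zero := Rect.mul_zero
    mul_assoc := Rect.mul_assoc
    one_mul := Rect.one_mul
    mul_one := Rect.mul_one }

theorem Rect.scalar_comm (k : (toRingSheaf K).obj.obj U) (b : A.Rect r s U) :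
    (k • Rect.one A r U).mul b = b.mul (k • Rect.one A s U) := by
  rw [Rect.smul_mul, Rect.mul_smul, Rect.one_mul, Rect.mul_one]

variable (A r s t)

/-- The scalar matrices `k • 1`. -/
def Rect.scalar (U : (Opens X)ᵒᵖ) : (toRingSheaf K).obj.obj U →+* A.Rect r r U where
  toFun k := k • Rect.one A r U
  map_one' := one_smul _ _
  map_mul' k l := by
    change (k * l) • Rect.one A r U = Rect.mul (k • Rect.one A r U) (l • Rect.one A r U)
    rw [Rect.smul_mul, Rect.mul_smul, Rect.one_mul, SemigroupAction.mul_smul]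
  map_zero' := zero_smul _ _
  map_add' k l := add_smul _ _ _

/-- The sheaf of abelian groups `⊕_{i,j} A_{r(i) s(j)}`. -/
def rectSheaf : Sheaf (siteOf X) AddCommGrpCat.{u} where
  obj :=
    { obj := fun U => AddCommGrpCat.of (A.Rect r s U)
      map := fun g => AddCommGrpCat.ofHom (Rect.res g)
      map_id := fun U => AddCommGrpCat.hom_ext (AddMonoidHom.ext fun x => Rect.ext fun i j =>
        ConcreteCategory.congr_hom ((A.entry (r i) (s j)).val.presheaf.map_id U) (x i j))
      map_comp := fun g h => AddCommGrpCat.hom_ext (AddMonoidHom.ext fun x => Rect.ext fun i j =>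
        ConcreteCategory.congr_hom ((A.entry (r i) (s j)).val.presheaf.map_comp g h) (x i j)) }
  property := by
    refine (TopCat.Presheaf.isSheaf_iff_isSheafUniqueGluing (X := X) _).2 fun ι W sf hsf => ?_
    have h : ∀ i j, ∃! x : (A.entry (r i) (s j)).val.presheaf.obj (Opposite.op (iSup W)),
        TopCat.Presheaf.IsGluing (X := X) (A.entry (r i) (s j)).val.presheaf W
          (fun a => (show A.Rect r s _ from sf a) i j) x := fun i j =>
      (TopCat.Presheaf.isSheaf_iff_isSheafUniqueGluing (X := X) _).1
        (A.entry (r i) (s j)).isSheaf W _ fun a b => congrFun (congrFun (hsf a b) i) j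
    choose x hx hx' using h
    refine ⟨(show A.Rect r s _ from x), fun a => Rect.ext fun i j => hx i j a, fun y hy => ?_⟩
    exact Rect.ext fun i j => hx' i j _ fun a => congrFun (congrFun (hy a) i) j

/-- The sheaf of `K`-algebras `⊕_{i,j} A_{r(i) r(j)}` with the matrix product. -/
def rectAlgebra : SheafAlgebra K where
  ring :=
    { obj :=
        { obj := fun U => RingCat.of (A.Rect r r U)
          map := fun g => RingCat.ofHom
            { Rect.res g with
              map_one' := Rect.res_one g
              map_mul' := Rect.res_mul g }
          map_id := fun U => RingCat.hom_ext (RingHom.ext fun x =>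
            ConcreteCategory.congr_hom ((A.rectSheaf r r).obj.map_id U) x)
          map_comp := fun g h => RingCat.hom_ext (RingHom.ext fun x =>
            ConcreteCategory.congr_hom ((A.rectSheaf r r).obj.map_comp g h) x) }
      property := (Presheaf.isSheaf_iff_isSheaf_forget _ _ (forget RingCat)).2
        ((Presheaf.isSheaf_iff_isSheaf_forget _ _ (forget AddCommGrpCat)).1
          (A.rectSheaf r r).property) }
  unit U := Rect.scalar A r U
  map_unit {U V} g k := (Rect.res_smul g _ _).trans (by rw [Rect.res_one]; rfl)
  commutes _ k a := Rect.scalar_comm (A := A) (r := r) (s := r) k a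

/-- The bimodule `⊕_{i,j} A_{r(i) s(j)}`, with actions given by matrix multiplication. -/
def rectBimodule : Bimodule (A.rectAlgebra r) (A.rectAlgebra s) where
  carrier := A.rectSheaf r s
  left U :=
    { smul := fun a b => Rect.mul (r := r) (s := r) (t := s) a b
      one_smul := Rect.one_mul
      mul_smul := Rect.mul_assoc
      smul_zero := fun a => Rect.mul_zero (A := A) (r := r) (s := r) (t := s) a
      zero_smul := fun b => Rect.zero_mul (A := A) (r := r) (s := r) (t := s) b
      smul_add := Rect.mul_add
      add_smul := Rect.add_mul }
  right U :=
    { smul := fun a b => Rect.mul (r := r) (s := s) (t := s) b a.unop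
      one_smul := Rect.mul_one
      mul_smul := fun a a' b => (Rect.mul_assoc (A := A) (r := r) (s := s) (t := s) (v := s)
        b a'.unop a.unop).symm
      smul_zero := fun a => Rect.zero_mul (A := A) (r := r) (s := s) (t := s) a.unop
      zero_smul := fun b => Rect.mul_zero (A := A) (r := r) (s := s) (t := s) b
      smul_add := fun a b b' => Rect.add_mul (A := A) (r := r) (s := s) (t := s) b b' a.unop
      add_smul := fun a a' b => Rect.mul_add (A := A) (r := r) (s := s) (t := s)
        b a.unop a'.unop }
  smul_comm U a c b := (Rect.mul_assoc (A := A) (r := r) (s := r) (t := s) (v := s)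
    a b c.unop).symm
  map_smul g a b := Rect.res_mul g a b
  map_op_smul g c b := Rect.res_mul g b c
  central _ k b := Rect.scalar_comm (A := A) (r := r) (s := s) k b

/-- The bimodule morphism
`(⊕ A_{r(i) s(j)}) ⊗ (⊕ A_{s(i) r(j)}) → ⊕ A_{r(i) r(j)}`, `(b ⊗ c)_{ij} = Σ_k b_{ik} c_{kj}`. -/
def rectPairing : (A.rectBimodule r s).tensor (A.rectBimodule s r) ⟶
    Bimodule.regular (A.rectAlgebra r) :=
  Bimodule.tensorLift _ _ _
    (fun U => AddMonoidHom.mk' (fun b => AddMonoidHom.mk'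
        (fun c => Rect.mul (A := A) (r := r) (s := s) (t := r) (U := U) b c)
        (fun c c' => Rect.mul_add _ c c'))
      (fun b b' => AddMonoidHom.ext fun c => Rect.add_mul b b' c))
    (fun _ b a c => Rect.mul_assoc (A := A) (r := r) (s := s) (t := s) (v := r) b a c)
    (fun _ _ g b c => Rect.res_mul g b c)
    (fun _ a b c => Rect.mul_assoc (A := A) (r := r) (s := r) (t := s) (v := r) a b c)
    (fun _ a b c => (Rect.mul_assoc (A := A) (r := r) (s := s) (t := r) (v := r) b c a).symm)

end Rect

/-- The sheaf of `K`-algebras `A = ⊕_{i,j=0}^q A_{ij}`. -/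
def toAlgebra (A : MatrixAlgebra K q) : SheafAlgebra K := A.rectAlgebra id

/-- The combinatorial restriction `f^♯A`, with `(f^♯A)_{ij} = A_{f(i) f(j)}`. -/
def restrict (A : MatrixAlgebra K q) {p : ℕ} (f : SimplexCategory.mk p ⟶ SimplexCategory.mk q) :
    MatrixAlgebra K p where
  entry i j := A.entry (f.toOrderHom i) (f.toOrderHom j)
  mul U := A.mul U
  smul_mul U := A.smul_mul U
  mul_smul U := A.mul_smul U
  map_mul g := A.map_mul g
  mul_assoc U := A.mul_assoc U
  one i U := A.one (f.toOrderHom i) U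
  map_one i _ _ g := A.map_one (f.toOrderHom i) g
  one_mul U := A.one_mul U
  mul_one U := A.mul_one U

section

variable (A : MatrixAlgebra K q) {p : ℕ} (f : SimplexCategory.mk p ⟶ SimplexCategory.mk q)

/-- The `(A, f^♯A)`-bimodule `A_f = ⊕_{i=0}^q ⊕_{j=0}^p A_{i f(j)}`. -/
def bimod : Bimodule A.toAlgebra (A.restrict f).toAlgebra :=
  A.rectBimodule id (fun j : Fin (p + 1) => f.toOrderHom j)

/-- The `(f^♯A, A)`-bimodule `A_f^{-1} = ⊕_{i=0}^p ⊕_{j=0}^q A_{f(i) j}`. -/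
def bimodInv : Bimodule (A.restrict f).toAlgebra A.toAlgebra :=
  A.rectBimodule (fun i : Fin (p + 1) => f.toOrderHom i) id

/-- `α⃗_f : A_f ⊗_{f^♯A} A_f^{-1} → A`, `(b ⊗ c)_{ij} = Σ_{k=0}^p b_{ik} c_{kj}`. -/
def alphaFwd : (A.bimod f).tensor (A.bimodInv f) ⟶ Bimodule.regular A.toAlgebra :=
  A.rectPairing id (fun j : Fin (p + 1) => f.toOrderHom j)

/-- `α⃖_f : A_f^{-1} ⊗_A A_f → f^♯A`, `(c ⊗ b)_{ij} = Σ_{k=0}^q c_{ik} b_{kj}`. -/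
def alphaBwd : (A.bimodInv f).tensor (A.bimod f) ⟶ Bimodule.regular (A.restrict f).toAlgebra :=
  A.rectPairing (fun j : Fin (p + 1) => f.toOrderHom j) id

end

/-- Each `A_{ij}` is locally free of rank one as a left `A_{ii}`-module and as a right
`A_{jj}`-module: near every point there is a section `u` of `A_{ij}` such that `a ↦ a u` is an
isomorphism from `A_{ii}` (and one such that `a ↦ u a` is an isomorphism from `A_{jj}`) over a
neighbourhood. -/
def LocallyFreeRankOne (A : MatrixAlgebra K q) : Prop :=
  ∀ (i j : Fin (q + 1)) (x : X),
    (∃ (V : Opens X) (_ : x ∈ V) (u : (A.entry i j).val.obj (Opposite.op V)),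
      ∀ (W : Opens X) (g : W ⟶ V), Function.Bijective
        (fun a : (A.entry i i).val.obj (Opposite.op W) =>
          A.mul (Opposite.op W) a ((A.entry i j).val.presheaf.map g.op u))) ∧
    (∃ (V : Opens X) (_ : x ∈ V) (u : (A.entry i j).val.obj (Opposite.op V)),
      ∀ (W : Opens X) (g : W ⟶ V), Function.Bijective
        (fun a : (A.entry j j).val.obj (Opposite.op W) =>
          A.mul (Opposite.op W) ((A.entry i j).val.presheaf.map g.op u) a))

/-- A section over `U` of the sheaf `Hom_{A_{jj}}(A_{ji}, A_{jj})` of homomorphisms of left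
`A_{jj}`-modules. -/
structure DualSection (A : MatrixAlgebra K q) (i j : Fin (q + 1)) (U : Opens X) where
  /-- the component over `V ⊆ U` -/
  app (V : Opens X) (g : V ⟶ U) :
    (A.entry j i).val.obj (Opposite.op V) →+ (A.entry j j).val.obj (Opposite.op V)
  app_mul (V : Opens X) (g : V ⟶ U) (a : (A.entry j j).val.obj (Opposite.op V))
    (y : (A.entry j i).val.obj (Opposite.op V)) :
    app V g (A.mul _ a y) = A.mul _ a (app V g y)
  naturality (V W : Opens X) (g : V ⟶ U) (h : W ⟶ V)
    (y : (A.entry j i).val.obj (Opposite.op V)) :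
    app W (h ≫ g) ((A.entry j i).val.presheaf.map h.op y) =
      (A.entry j j).val.presheaf.map h.op (app V g y)

/-- For `j ≤ i` the morphism of sheaves `A_{ij} → Hom_{A_{jj}}(A_{ji}, A_{jj})`,
`x ↦ (y ↦ y x)`, given by the product `A_{ji} ⊗ A_{ij} → A_{jj}` is an isomorphism. -/
def PerfectProduct (A : MatrixAlgebra K q) : Prop :=
  ∀ (i j : Fin (q + 1)), j ≤ i → ∀ (U : Opens X) (φ : A.DualSection i j U),
    ∃! x : (A.entry i j).val.obj (Opposite.op U),
      ∀ (V : Opens X) (g : V ⟶ U) (y : (A.entry j i).val.obj (Opposite.op V)),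
        φ.app V g y = A.mul _ y ((A.entry i j).val.presheaf.map g.op x)

end MatrixAlgebra

end

noncomputable section

section Local

variable {X : TopCat.{u}}

/-- Sections of a sheaf of abelian groups which agree locally are equal. -/
theorem eq_of_locally_eq (G : Sheaf (siteOf X) AddCommGrpCat.{u}) {U : (Opens X)ᵒᵖ}
    {s t : G.obj.obj U}
    (h : ∀ x ∈ U.unop, ∃ (V : (Opens X)ᵒᵖ) (g : U ⟶ V), x ∈ V.unop ∧
      G.obj.map g s = G.obj.map g t) : s = t := by
  refine G.isSeparated U.unop (Presheaf.equalizerSieve (F := G.obj) s t) ?_ _ _ fun Y f hf => hf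
  intro x hx
  obtain ⟨V, g, hxV, hg⟩ := h x hx
  exact ⟨V.unop, g.unop, hg, hxV⟩

/-- Local sections agreeing on overlaps, given near every point, glue. -/
theorem exists_gluing (G : Sheaf (siteOf X) AddCommGrpCat.{u}) {U : (Opens X)ᵒᵖ}
    (C : ∀ (V : (Opens X)ᵒᵖ), (U ⟶ V) → G.obj.obj V → Prop)
    (hres : ∀ {V W : (Opens X)ᵒᵖ} (g : U ⟶ V) (h : V ⟶ W) (s : G.obj.obj V),
      C V g s → C W (g ≫ h) (G.obj.map h s))
    (huniq : ∀ {V : (Opens X)ᵒᵖ} (g : U ⟶ V) (s s' : G.obj.obj V), C V g s → C V g s' → s = s')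
    (hex : ∀ x ∈ U.unop, ∃ (V : (Opens X)ᵒᵖ) (g : U ⟶ V) (s : G.obj.obj V), x ∈ V.unop ∧ C V g s) :
    ∃ s : G.obj.obj U, ∀ (V : (Opens X)ᵒᵖ) (g : U ⟶ V) (s' : G.obj.obj V), C V g s' →
      G.obj.map g s = s' := by
  choose V g s hxV hs using hex
  obtain ⟨y, hy, -⟩ := TopCat.Sheaf.existsUnique_gluing' (X := X) G
    (fun x : U.unop => (V x.1 x.2).unop) U.unop (fun x => (g x.1 x.2).unop)
    (fun x hx => Opens.mem_iSup.2 ⟨⟨x, hx⟩, hxV x hx⟩) (fun x => s x.1 x.2) (by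
      intro x z
      refine huniq (V := Opposite.op ((V x.1 x.2).unop ⊓ (V z.1 z.2).unop))
        (g x.1 x.2 ≫ (Opens.infLELeft _ _).op) _ _ (hres _ _ _ (hs _ _)) ?_
      have := hres (g z.1 z.2) (Opens.infLERight (V x.1 x.2).unop (V z.1 z.2).unop).op _ (hs _ _)
      exact this)
  refine ⟨y, fun W k s' hs' => eq_of_locally_eq G fun x hx => ?_⟩
  have hxU : x ∈ U.unop := k.unop.le hx
  let l : W ⟶ Opposite.op (W.unop ⊓ (V x hxU).unop) := (Opens.infLELeft _ _).op
  let r : V x hxU ⟶ Opposite.op (W.unop ⊓ (V x hxU).unop) := (Opens.infLERight _ _).op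
  refine ⟨_, l, ⟨hx, hxV x hxU⟩, ?_⟩
  have h1 := hres k l s' hs'
  have h2 := hres (g x hxU) r _ (hs x hxU)
  have h3 := huniq _ _ _ h1 h2
  rw [h3, ← ConcreteCategory.comp_apply, ← Functor.map_comp]
  have h4 := hy ⟨x, hxU⟩
  change G.obj.map (g x hxU) y = s x hxU at h4
  rw [← h4, ← ConcreteCategory.comp_apply, ← Functor.map_comp]
  rfl

/-- Maps out of `F(V)`, for `V ⊆ U`, which are compatible with restrictions and take values in a
sheaf extend along a locally bijective morphism. -/
theorem exists_extension {F F' : (Opens X)ᵒᵖ ⥤ AddCommGrpCat.{u}} (φ : F ⟶ F')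
    [Presheaf.IsLocallyInjective (siteOf X) φ] [Presheaf.IsLocallySurjective (siteOf X) φ]
    (G : Sheaf (siteOf X) AddCommGrpCat.{u}) {U : (Opens X)ᵒᵖ}
    (β : ∀ (V : (Opens X)ᵒᵖ), (U ⟶ V) → F.obj V →+ G.obj.obj V)
    (hβ : ∀ {V W : (Opens X)ᵒᵖ} (g : U ⟶ V) (h : V ⟶ W) (x : F.obj V),
      G.obj.map h (β V g x) = β W (g ≫ h) (F.map h x)) (t : F'.obj U) :
    ∃ y : G.obj.obj U, ∀ (V : (Opens X)ᵒᵖ) (g : U ⟶ V) (x : F.obj V),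
      φ.app V x = F'.map g t → G.obj.map g y = β V g x := by
  refine (exists_gluing G (U := U)
    (fun V g s => ∃ x : F.obj V, φ.app V x = F'.map g t ∧ s = β V g x) ?_ ?_ ?_).imp
    fun y hy V g x hx => hy V g _ ⟨x, hx, rfl⟩
  · rintro V W g h s ⟨x, hx, rfl⟩
    refine ⟨F.map h x, ?_, hβ g h x⟩
    rw [NatTrans.naturality_apply φ h x, hx, Functor.map_comp, ConcreteCategory.comp_apply]
  · rintro V g s s' ⟨x, hx, rfl⟩ ⟨x', hx', rfl⟩
    refine eq_of_locally_eq G fun z hz => ?_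
    obtain ⟨W, k, hk, hzW⟩ :=
      Presheaf.equalizerSieve_mem (siteOf X) φ x x' (hx.trans hx'.symm) z hz
    refine ⟨Opposite.op W, k.op, hzW, ?_⟩
    rw [hβ, hβ]
    exact congrArg _ hk
  · intro x hx
    obtain ⟨W, k, ⟨s, hs⟩, hzW⟩ := Presheaf.imageSieve_mem (siteOf X) φ t x hx
    exact ⟨Opposite.op W, k.op, _, hzW, s, hs, rfl⟩

/-- A morphism of sheaves which is injective on sections and locally surjective is an
isomorphism. -/
theorem isIso_of_injective_of_locally_surjective {F G : Sheaf (siteOf X) AddCommGrpCat.{u}}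
    (φ : F ⟶ G) (hinj : ∀ U, Function.Injective (φ.hom.app U))
    (hsurj : ∀ (U : (Opens X)ᵒᵖ) (s : G.obj.obj U), ∀ x ∈ U.unop,
      ∃ (V : (Opens X)ᵒᵖ) (g : U ⟶ V) (t : F.obj.obj V), x ∈ V.unop ∧
        φ.hom.app V t = G.obj.map g s) : IsIso φ := by
  refine (Sheaf.isLocallyBijective_iff_isIso φ).1
    ⟨Presheaf.isLocallyInjective_of_injective _ _ hinj, ⟨fun {U} s x hx => ?_⟩⟩
  obtain ⟨V, g, t, hxV, ht⟩ := hsurj (Opposite.op U) s x hx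
  exact ⟨V.unop, g.unop, ⟨t, ht⟩, hxV⟩

end Local

section Tensor

variable {X : TopCat.{u}} {K : Sheaf (siteOf X) CommRingCat.{u}} {A B : SheafAlgebra K}

/-- The restriction of sections of a sheaf of modules. -/
def SheafOfModules.res {R : Sheaf (siteOf X) RingCat.{u}} (M : SheafOfModules.{u} R)
    {U V : (Opens X)ᵒᵖ} (g : U ⟶ V) : M.val.obj U →+ M.val.obj V :=
  (M.val.presheaf.map g).hom

namespace SheafOfModules

variable {R : Sheaf (siteOf X) RingCat.{u}} (M N : SheafOfModules.{u} R) {U V W : (Opens X)ᵒᵖ}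

theorem res_smul (g : U ⟶ V) (r : R.obj.obj U) (m : M.val.obj U) :
    M.res g (r • m) = R.obj.map g r • M.res g m :=
  M.val.map_smul g r m

theorem res_comp (g : U ⟶ V) (h : V ⟶ W) (m : M.val.obj U) :
    M.res (g ≫ h) m = M.res h (M.res g m) :=
  ConcreteCategory.congr_hom (M.val.presheaf.map_comp g h) m

theorem res_id (m : M.val.obj U) : M.res (𝟙 U) m = m :=
  ConcreteCategory.congr_hom (M.val.presheaf.map_id U) m

variable {M N} in
theorem res_app (φ : M ⟶ N) (g : U ⟶ V) (m : M.val.obj U) :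
    N.res g (φ.val.app U m) = φ.val.app V (M.res g m) :=
  (PresheafOfModules.naturality_apply φ.val g m).symm

theorem eq_of_res {s t : M.val.obj U}
    (h : ∀ x ∈ U.unop, ∃ (V : (Opens X)ᵒᵖ) (g : U ⟶ V), x ∈ V.unop ∧
      M.res g s = M.res g t) : s = t :=
  eq_of_locally_eq ((SheafOfModules.toSheaf R).obj M) h

variable {M N} in
theorem hom_ext_apply {φ ψ : M ⟶ N}
    (h : ∀ (U : (Opens X)ᵒᵖ) (m : M.val.obj U), φ.val.app U m = ψ.val.app U m) : φ = ψ :=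
  SheafOfModules.hom_ext (PresheafOfModules.hom_ext fun U =>
    ModuleCat.hom_ext (LinearMap.ext fun m => h U m))

variable {M N} in
theorem isIso_of_injective_of_locally_surjective (φ : M ⟶ N)
    (hinj : ∀ U, Function.Injective (φ.val.app U))
    (hsurj : ∀ (U : (Opens X)ᵒᵖ) (s : N.val.obj U), ∀ x ∈ U.unop,
      ∃ (V : (Opens X)ᵒᵖ) (g : U ⟶ V) (t : M.val.obj V), x ∈ V.unop ∧
        φ.val.app V t = N.res g s) : IsIso φ := by
  have : IsIso ((SheafOfModules.toSheaf R).map φ) :=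
    _root_.isIso_of_injective_of_locally_surjective _ hinj hsurj
  exact isIso_of_reflects_iso φ (SheafOfModules.toSheaf R)

end SheafOfModules

namespace Bimodule

variable (P : Bimodule A B) (M : SheafOfModules.{u} B.ring) {U V : (Opens X)ᵒᵖ}

/-- The canonical map from the presheaf tensor product to the sheaf tensor product. -/
def toTensor (U : (Opens X)ᵒᵖ) :
    BalancedTensor (B.ring.obj.obj U) (P.carrier.obj.obj U) (M.val.obj U) →+
      (P.tensorFunctor.obj M).val.obj U :=
  ((CategoryTheory.toSheafify (siteOf X) (P.tensorPresheaf M.val)).app U).hom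

theorem toTensor_tmul (b : P.carrier.obj.obj U) (m : M.val.obj U) :
    P.toTensor M U (BalancedTensor.tmul _ b m) = P.tmul M b m := rfl

theorem add_tmul (b b' : P.carrier.obj.obj U) (m : M.val.obj U) :
    P.tmul M (b + b') m = P.tmul M b m + P.tmul M b' m := by
  simp only [← toTensor_tmul, BalancedTensor.add_tmul, map_add]

theorem tmul_add (b : P.carrier.obj.obj U) (m m' : M.val.obj U) :
    P.tmul M b (m + m') = P.tmul M b m + P.tmul M b m' := by
  simp only [← toTensor_tmul, BalancedTensor.tmul_add, map_add]

theorem op_smul_tmul (s : B.ring.obj.obj U) (b : P.carrier.obj.obj U) (m : M.val.obj U) :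
    P.tmul M (op s • b) m = P.tmul M b (s • m) := by
  rw [← toTensor_tmul, BalancedTensor.smul_tmul, toTensor_tmul]

theorem smul_tmul (a : A.ring.obj.obj U) (b : P.carrier.obj.obj U) (m : M.val.obj U) :
    a • P.tmul M b m = P.tmul M (a • b) m := by
  have h := PresheafOfModules.Sheafify.map_smul_eq (𝟙 A.ring.obj)
    (M₀ := P.tensorLeft M.val) (A := (presheafToSheaf (siteOf X) AddCommGrpCat.{u}).obj
      (P.tensorLeft M.val).presheaf)
    (CategoryTheory.toSheafify (siteOf X) (P.tensorLeft M.val).presheaf) a (P.tmul M b m) (𝟙 U) a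
    (ConcreteCategory.congr_hom (A.ring.obj.map_id U) a).symm (BalancedTensor.tmul _ b m)
    ((P.tensorFunctor.obj M).res_id _).symm
  exact ((P.tensorFunctor.obj M).res_id _).symm.trans h

theorem res_toTensor (g : U ⟶ V)
    (x : BalancedTensor (B.ring.obj.obj U) (P.carrier.obj.obj U) (M.val.obj U)) :
    (P.tensorFunctor.obj M).res g (P.toTensor M U x) =
      P.toTensor M V ((P.tensorPresheaf M.val).map g x) :=
  (NatTrans.naturality_apply
    (CategoryTheory.toSheafify (siteOf X) (P.tensorPresheaf M.val)) g x).symm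

theorem res_tmul (g : U ⟶ V) (b : P.carrier.obj.obj U) (m : M.val.obj U) :
    (P.tensorFunctor.obj M).res g (P.tmul M b m) =
      P.tmul M (P.carrier.obj.map g b) (M.res g m) :=
  P.res_toTensor M g _

theorem tensorFunctor_map_tmul {M N : SheafOfModules.{u} B.ring} (φ : M ⟶ N)
    (b : P.carrier.obj.obj U) (m : M.val.obj U) :
    (P.tensorFunctor.map φ).val.app U (P.tmul M b m) = P.tmul N b (φ.val.app U m) := by
  have h := CategoryTheory.toSheafify_naturality (siteOf X)
    ((PresheafOfModules.toPresheaf _).map (P.tensorLeftFunctor.map φ.val))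
  exact (ConcreteCategory.congr_hom (NatTrans.congr_app h U) (BalancedTensor.tmul _ b m)).symm

variable {P M} in
/-- A local property of sections of `P ⊗_B M` which is stable under addition holds if it holds for
the sections `b ⊗ m`. -/
theorem tensor_induction {C : ∀ U : (Opens X)ᵒᵖ, (P.tensorFunctor.obj M).val.obj U → Prop}
    (hloc : ∀ (U : (Opens X)ᵒᵖ) (t : (P.tensorFunctor.obj M).val.obj U),
      (∀ x ∈ U.unop, ∃ (V : (Opens X)ᵒᵖ) (g : U ⟶ V), x ∈ V.unop ∧
        C V ((P.tensorFunctor.obj M).res g t)) → C U t)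
    (hadd : ∀ (U : (Opens X)ᵒᵖ) s t, C U s → C U t → C U (s + t))
    (hzero : ∀ (U : (Opens X)ᵒᵖ), C U 0)
    (htmul : ∀ (U : (Opens X)ᵒᵖ) (b : P.carrier.obj.obj U) (m : M.val.obj U), C U (P.tmul M b m))
    {U : (Opens X)ᵒᵖ} (t : (P.tensorFunctor.obj M).val.obj U) : C U t := by
  refine hloc U t fun x hx => ?_
  obtain ⟨V, g, ⟨s, hs⟩, hxV⟩ := Presheaf.imageSieve_mem (siteOf X)
    (CategoryTheory.toSheafify (siteOf X) (P.tensorPresheaf M.val)) t x hx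
  refine ⟨Opposite.op V, g.op, hxV, ?_⟩
  have hs' : P.toTensor M (Opposite.op V) s = (P.tensorFunctor.obj M).res g.op t := hs
  rw [← hs']
  clear hs hs'
  induction s using BalancedTensor.induction with
  | h0 => rw [map_zero]; exact hzero _
  | ht b m => exact htmul _ b m
  | ha s t hs ht => rw [map_add]; exact hadd _ _ _ hs ht

variable {P M} in
/-- Two families of additive maps on the sections of `P ⊗_B M` over open subsets of `U`, compatible
with restrictions, are equal if they agree on the sections `b ⊗ m`. -/
theorem tensor_hom_ext {R : Sheaf (siteOf X) RingCat.{u}} (G : SheafOfModules.{u} R)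
    {U : (Opens X)ᵒᵖ}
    (φ ψ : ∀ (V : (Opens X)ᵒᵖ), (U ⟶ V) → (P.tensorFunctor.obj M).val.obj V →+ G.val.obj V)
    (hφ : ∀ {V W : (Opens X)ᵒᵖ} (g : U ⟶ V) (h : V ⟶ W) t,
      G.res h (φ V g t) = φ W (g ≫ h) ((P.tensorFunctor.obj M).res h t))
    (hψ : ∀ {V W : (Opens X)ᵒᵖ} (g : U ⟶ V) (h : V ⟶ W) t,
      G.res h (ψ V g t) = ψ W (g ≫ h) ((P.tensorFunctor.obj M).res h t))
    (h : ∀ (V : (Opens X)ᵒᵖ) (g : U ⟶ V) b m, φ V g (P.tmul M b m) = ψ V g (P.tmul M b m))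
    (t : (P.tensorFunctor.obj M).val.obj U) : φ U (𝟙 U) t = ψ U (𝟙 U) t := by
  refine tensor_induction (P := P) (M := M)
    (C := fun V t => ∀ g : U ⟶ V, φ V g t = ψ V g t) ?_ ?_ ?_ ?_ t (𝟙 U)
  · intro V t ht g
    refine G.eq_of_res fun x hx => ?_
    obtain ⟨W, k, hxW, hW⟩ := ht x hx
    exact ⟨W, k, hxW, by rw [hφ, hψ, hW]⟩
  · intro V s t hs ht g
    rw [map_add, map_add, hs, ht]
  · intro V g
    rw [map_zero, map_zero]
  · intro V b m g
    exact h V g b m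

/-- Balanced biadditive maps `P(V) × M(V) → G(V)`, for `V ⊆ U`, compatible with restrictions induce
a map on the sections of `P ⊗_B M` over `U`. -/
theorem exists_tensor_extension {R : Sheaf (siteOf X) RingCat.{u}} (G : SheafOfModules.{u} R)
    {U : (Opens X)ᵒᵖ}
    (β : ∀ (V : (Opens X)ᵒᵖ), (U ⟶ V) → P.carrier.obj.obj V →+ M.val.obj V →+ G.val.obj V)
    (balanced : ∀ V g n (s : B.ring.obj.obj V) m, β V g (op s • n) m = β V g n (s • m))
    (natural : ∀ {V W : (Opens X)ᵒᵖ} (g : U ⟶ V) (h : V ⟶ W) n m,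
      G.res h (β V g n m) = β W (g ≫ h) (P.carrier.obj.map h n) (M.res h m))
    (t : (P.tensorFunctor.obj M).val.obj U) :
    ∃ y : G.val.obj U, ∀ (V : (Opens X)ᵒᵖ) (g : U ⟶ V) x,
      P.toTensor M V x = (P.tensorFunctor.obj M).res g t →
        G.res g y = BalancedTensor.lift (β V g) (balanced V g) x :=
  exists_extension (CategoryTheory.toSheafify (siteOf X) (P.tensorPresheaf M.val))
    ((SheafOfModules.toSheaf R).obj G)
    (fun V g => BalancedTensor.lift (β V g) (balanced V g))
    (fun {V W} g h x => DFunLike.congr_fun (BalancedTensor.hom_ext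
      (f := (G.res h).comp (BalancedTensor.lift (β V g) (balanced V g)))
      (g := (BalancedTensor.lift (β W (g ≫ h)) (balanced W (g ≫ h))).comp
        ((P.tensorPresheaf M.val).map h).hom) fun n m => natural g h n m) x) t

end Bimodule

end Tensor

section Morita

variable {X : TopCat.{u}} {K : Sheaf (siteOf X) CommRingCat.{u}} {A B : SheafAlgebra K}

namespace Bimodule

/-- The morphism `P ⊗_B M → N` induced by balanced biadditive maps `P(U) × M(U) → N(U)`. -/
theorem exists_tensor_desc (P : Bimodule A B) (M : SheafOfModules.{u} B.ring)
    (N : SheafOfModules.{u} A.ring)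
    (β : ∀ U : (Opens X)ᵒᵖ, P.carrier.obj.obj U →+ M.val.obj U →+ N.val.obj U)
    (balanced : ∀ U n (s : B.ring.obj.obj U) m, β U (op s • n) m = β U n (s • m))
    (natural : ∀ {U V : (Opens X)ᵒᵖ} (g : U ⟶ V) n m, N.res g (β U n m) =
      β V (P.carrier.obj.map g n) (M.res g m))
    (linear : ∀ U (a : A.ring.obj.obj U) n m, β U (a • n) m = a • β U n m) :
    ∃ φ : P.tensorFunctor.obj M ⟶ N, ∀ (U : (Opens X)ᵒᵖ) (b : P.carrier.obj.obj U)
      (m : M.val.obj U), φ.val.app U (P.tmul M b m) = β U b m := by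
  let β' : P.tensorPresheaf M.val ⟶ N.val.presheaf :=
    { app := fun U => AddCommGrpCat.ofHom (BalancedTensor.lift (β U) (balanced U))
      naturality := fun U V g => AddCommGrpCat.hom_ext (BalancedTensor.hom_ext
        (S := B.ring.obj.obj U) (M := M.val.obj U) fun n m => (natural g n m).symm) }
  let ψ : (P.tensorFunctor.obj M).val.presheaf ⟶ N.val.presheaf :=
    CategoryTheory.sheafifyLift (siteOf X) β' N.isSheaf
  let χ (U : (Opens X)ᵒᵖ) : (P.tensorFunctor.obj M).val.obj U →+ N.val.obj U := (ψ.app U).hom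
  have hχ : ∀ (U : (Opens X)ᵒᵖ) (b : P.carrier.obj.obj U) (m : M.val.obj U),
      χ U (P.tmul M b m) = β U b m := fun U b m =>
    ConcreteCategory.congr_hom (NatTrans.congr_app
      (CategoryTheory.toSheafify_sheafifyLift (siteOf X) β' N.isSheaf) U)
      (BalancedTensor.tmul _ b m)
  have hnat : ∀ {U V : (Opens X)ᵒᵖ} (g : U ⟶ V) (t : (P.tensorFunctor.obj M).val.obj U),
      N.res g (χ U t) = χ V ((P.tensorFunctor.obj M).res g t) :=
    fun g t => (NatTrans.naturality_apply ψ g t).symm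
  refine ⟨⟨PresheafOfModules.homMk ψ fun U a t => ?_⟩, hχ⟩
  have h := tensor_hom_ext (P := P) (M := M) N (U := U)
    (fun V g => (χ V).comp (DistribSMul.toAddMonoidHom _ (A.ring.obj.map g a)))
    (fun V g => (DistribSMul.toAddMonoidHom (N.val.obj V) (A.ring.obj.map g a)).comp (χ V))
    (fun {V W} g h t => by
      refine (hnat h _).trans (congrArg (χ W) ?_)
      refine (SheafOfModules.res_smul _ h _ t).trans ?_
      rw [Functor.map_comp]
      rfl)
    (fun {V W} g h t => by
      refine (SheafOfModules.res_smul _ h _ (χ V t)).trans ?_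
      rw [hnat, Functor.map_comp]
      rfl)
    (fun V g b m => by
      change χ V (A.ring.obj.map g a • P.tmul M b m) =
        A.ring.obj.map g a • χ V (P.tmul M b m)
      rw [smul_tmul, hχ, linear, hχ]) t
  have e : A.ring.obj.map (𝟙 U) a = a := ConcreteCategory.congr_hom (A.ring.obj.map_id U) a
  change χ U (A.ring.obj.map (𝟙 U) a • t) = A.ring.obj.map (𝟙 U) a • χ U t at h
  rwa [e] at h

section Pairing

variable {P : Bimodule A B} {Q : Bimodule B A} (μ : P.tensor Q ⟶ regular A) {U V : (Opens X)ᵒᵖ}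

theorem evalPure_add_left (b b' : P.carrier.obj.obj U) (c : Q.carrier.obj.obj U) :
    evalPure μ (b + b') c = evalPure μ b c + evalPure μ b' c :=
  (congrArg (μ.hom.hom.app U) (P.add_tmul Q.leftModule b b' c)).trans
    (map_add (μ.hom.hom.app U).hom _ _)

theorem evalPure_add_right (b : P.carrier.obj.obj U) (c c' : Q.carrier.obj.obj U) :
    evalPure μ b (c + c') = evalPure μ b c + evalPure μ b c' :=
  (congrArg (μ.hom.hom.app U) (P.tmul_add Q.leftModule b c c')).trans
    (map_add (μ.hom.hom.app U).hom _ _)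

theorem evalPure_balanced (b : P.carrier.obj.obj U) (s : B.ring.obj.obj U)
    (c : Q.carrier.obj.obj U) : evalPure μ (op s • b) c = evalPure μ b (s • c) :=
  congrArg (μ.hom.hom.app U) (P.op_smul_tmul Q.leftModule s b c)

theorem evalPure_smul (a : A.ring.obj.obj U) (b : P.carrier.obj.obj U)
    (c : Q.carrier.obj.obj U) : evalPure μ (a • b) c = a * evalPure μ b c :=
  (congrArg (μ.hom.hom.app U) (P.smul_tmul Q.leftModule a b c).symm).trans
    (μ.map_smul U a (pure P Q b c))

theorem op_smul_pure (a : A.ring.obj.obj U) (b : P.carrier.obj.obj U)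
    (c : Q.carrier.obj.obj U) : op a • pure P Q b c = pure P Q b (op a • c) := by
  have h := PresheafOfModules.Sheafify.map_smul_eq (R := A.opRing) (𝟙 A.opRing.obj)
    (P.toTensorRight Q) (op a) (pure P Q b c) (𝟙 U) (op a)
    (ConcreteCategory.congr_hom (A.opRing.obj.map_id U) (op a)).symm
    (BalancedTensor.tmul _ b c)
    (ConcreteCategory.congr_hom ((P.tensor Q).carrier.obj.map_id U) _).symm
  exact (ConcreteCategory.congr_hom ((P.tensor Q).carrier.obj.map_id U) _).symm.trans h

theorem evalPure_op_smul (a : A.ring.obj.obj U) (b : P.carrier.obj.obj U)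
    (c : Q.carrier.obj.obj U) : evalPure μ b (op a • c) = evalPure μ b c * a :=
  (congrArg (μ.hom.hom.app U) (op_smul_pure a b c).symm).trans
    (μ.map_op_smul U a (pure P Q b c))

theorem map_evalPure (g : U ⟶ V) (b : P.carrier.obj.obj U) (c : Q.carrier.obj.obj U) :
    A.ring.obj.map g (evalPure μ b c) =
      evalPure μ (P.carrier.obj.map g b) (Q.carrier.obj.map g c) :=
  (NatTrans.naturality_apply μ.hom.hom g (pure P Q b c)).symm.trans
    (congrArg (μ.hom.hom.app V) (P.res_tmul Q.leftModule g b c))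

/-- The biadditive map `(c, m) ↦ μ(b ⊗ c) m`. -/
def evalPureSMul (M : SheafOfModules.{u} A.ring) (b : P.carrier.obj.obj U) :
    Q.carrier.obj.obj U →+ M.val.obj U →+ M.val.obj U :=
  AddMonoidHom.mk' (fun c => DistribSMul.toAddMonoidHom (M.val.obj U) (evalPure μ b c))
    (fun c c' => AddMonoidHom.ext fun m =>
      (congrArg (· • m) (evalPure_add_right μ b c c')).trans (add_smul _ _ _))

theorem evalPureSMul_balanced (M : SheafOfModules.{u} A.ring) (b : P.carrier.obj.obj U)
    (c : Q.carrier.obj.obj U) (a : A.ring.obj.obj U) (m : M.val.obj U) :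
    evalPureSMul μ M b (op a • c) m = evalPureSMul μ M b c (a • m) := by
  change evalPure μ b (op a • c) • m = evalPure μ b c • a • m
  rw [evalPure_op_smul, mul_smul]

theorem exists_act (M : SheafOfModules.{u} A.ring) (b : P.carrier.obj.obj U)
    (t : (Q.tensorFunctor.obj M).val.obj U) :
    ∃ y : M.val.obj U, ∀ (V : (Opens X)ᵒᵖ) (g : U ⟶ V) x,
      Q.toTensor M V x = (Q.tensorFunctor.obj M).res g t →
        M.res g y = BalancedTensor.lift (evalPureSMul μ M (P.carrier.obj.map g b))
          (evalPureSMul_balanced μ M _) x :=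
  exists_tensor_extension Q M M (fun V g => evalPureSMul μ M (P.carrier.obj.map g b)) _
    (fun {V W} g h n m => by
      change M.res h (evalPure μ (P.carrier.obj.map g b) n • m) =
        evalPure μ (P.carrier.obj.map (g ≫ h) b) (Q.carrier.obj.map h n) • M.res h m
      rw [SheafOfModules.res_smul, map_evalPure, Functor.map_comp]
      rfl) t

/-- The section `μ(b ⊗ c) m` of `M`, extended from `t = c ⊗ m` to all sections `t` of
`Q ⊗_A M`. -/
def act (M : SheafOfModules.{u} A.ring) (b : P.carrier.obj.obj U)
    (t : (Q.tensorFunctor.obj M).val.obj U) : M.val.obj U :=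
  (exists_act μ M b t).choose

variable (M : SheafOfModules.{u} A.ring)

theorem act_spec (b : P.carrier.obj.obj U) (t : (Q.tensorFunctor.obj M).val.obj U)
    (g : U ⟶ V) (x) (hx : Q.toTensor M V x = (Q.tensorFunctor.obj M).res g t) :
    M.res g (act μ M b t) = BalancedTensor.lift (evalPureSMul μ M (P.carrier.obj.map g b))
          (evalPureSMul_balanced μ M _) x :=
  (exists_act μ M b t).choose_spec V g x hx

theorem act_tmul (b : P.carrier.obj.obj U) (c : Q.carrier.obj.obj U) (m : M.val.obj U) :
    act μ M b (Q.tmul M c m) = evalPure μ b c • m := by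
  have h := act_spec μ M b (Q.tmul M c m) (𝟙 U) (BalancedTensor.tmul _ c m)
    ((SheafOfModules.res_id _ _).symm)
  rw [SheafOfModules.res_id] at h
  refine h.trans ?_
  change evalPure μ (P.carrier.obj.map (𝟙 U) b) c • m = _
  rw [CategoryTheory.Functor.map_id]
  rfl

theorem exists_toTensor (t : (Q.tensorFunctor.obj M).val.obj U) (x : X) (hx : x ∈ U.unop) :
    ∃ (V : (Opens X)ᵒᵖ) (g : U ⟶ V) (s : _), x ∈ V.unop ∧
      Q.toTensor M V s = (Q.tensorFunctor.obj M).res g t := by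
  obtain ⟨V, g, ⟨s, hs⟩, hxV⟩ := Presheaf.imageSieve_mem (siteOf X)
    (CategoryTheory.toSheafify (siteOf X) (Q.tensorPresheaf M.val)) t x hx
  exact ⟨Opposite.op V, g.op, s, hxV, hs⟩

theorem res_act (g : U ⟶ V) (b : P.carrier.obj.obj U) (t : (Q.tensorFunctor.obj M).val.obj U) :
    M.res g (act μ M b t) = act μ M (P.carrier.obj.map g b) ((Q.tensorFunctor.obj M).res g t) := by
  refine M.eq_of_res fun x hx => ?_
  obtain ⟨W, h, s, hxW, hs⟩ := exists_toTensor M ((Q.tensorFunctor.obj M).res g t) x hx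
  refine ⟨W, h, hxW, ?_⟩
  rw [act_spec μ M _ _ h s hs, ← SheafOfModules.res_comp,
    act_spec μ M _ _ (g ≫ h) s (by rw [hs, SheafOfModules.res_comp])]
  simp only [Functor.map_comp, ConcreteCategory.comp_apply]

theorem act_add_right (b : P.carrier.obj.obj U) (t t' : (Q.tensorFunctor.obj M).val.obj U) :
    act μ M b (t + t') = act μ M b t + act μ M b t' := by
  refine M.eq_of_res fun x hx => ?_
  obtain ⟨V, g, s, hxV, hs⟩ := exists_toTensor M t x hx
  obtain ⟨W, h, s', hxW, hs'⟩ := exists_toTensor M ((Q.tensorFunctor.obj M).res g t') x hxV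
  obtain ⟨s₁, hs₁⟩ : ∃ s₁, Q.toTensor M W s₁ = (Q.tensorFunctor.obj M).res (g ≫ h) t :=
    ⟨(Q.tensorPresheaf M.val).map h s, by rw [← res_toTensor, hs, SheafOfModules.res_comp]⟩
  rw [← SheafOfModules.res_comp] at hs'
  refine ⟨W, g ≫ h, hxW, ?_⟩
  rw [map_add, act_spec μ M _ _ _ _ hs₁, act_spec μ M _ _ _ _ hs', ← map_add]
  exact act_spec μ M _ _ _ _ (by rw [map_add, map_add, hs', hs₁])

/-- `act` as an additive map in the second variable. -/
def actHom (b : P.carrier.obj.obj U) : (Q.tensorFunctor.obj M).val.obj U →+ M.val.obj U :=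
  AddMonoidHom.mk' (act μ M b) (act_add_right μ M b)

/-- Additive maps on the sections of `Q ⊗_A M` over open subsets of `U`, compatible with
restrictions, agree with `act` if they do so on the sections `c ⊗ m`. -/
theorem act_eq {b : P.carrier.obj.obj U}
    (ψ : ∀ (V : (Opens X)ᵒᵖ), (U ⟶ V) → (Q.tensorFunctor.obj M).val.obj V →+ M.val.obj V)
    (hψ : ∀ {V W : (Opens X)ᵒᵖ} (g : U ⟶ V) (h : V ⟶ W) t,
      M.res h (ψ V g t) = ψ W (g ≫ h) ((Q.tensorFunctor.obj M).res h t))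
    (h : ∀ (V : (Opens X)ᵒᵖ) (g : U ⟶ V) c m,
      evalPure μ (P.carrier.obj.map g b) c • m = ψ V g (Q.tmul M c m))
    (t : (Q.tensorFunctor.obj M).val.obj U) : act μ M b t = ψ U (𝟙 U) t := by
  have := tensor_hom_ext (P := Q) (M := M) M (U := U)
    (fun V g => actHom μ M (P.carrier.obj.map g b)) ψ
    (fun {V W} g h t => by
      refine (res_act μ M h _ t).trans ?_
      rw [Functor.map_comp]; rfl) hψ
    (fun V g c m => (act_tmul μ M _ c m).trans (h V g c m)) t
  refine Eq.trans ?_ this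
  change _ = act μ M (P.carrier.obj.map (𝟙 U) b) t
  rw [CategoryTheory.Functor.map_id]
  rfl

theorem act_add_left (b b' : P.carrier.obj.obj U) (t : (Q.tensorFunctor.obj M).val.obj U) :
    act μ M (b + b') t = act μ M b t + act μ M b' t := by
  refine (act_eq μ M (b := b + b') (fun V g => actHom μ M (P.carrier.obj.map g b) +
    actHom μ M (P.carrier.obj.map g b')) ?_ ?_ t).trans ?_
  · intro V W g h t
    refine (map_add (M.res h) _ _).trans ?_
    refine (congrArg₂ (· + ·) (res_act μ M h _ t) (res_act μ M h _ t)).trans ?_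
    simp only [Functor.map_comp, ConcreteCategory.comp_apply]
    rfl
  · intro V g c m
    refine Eq.trans ?_ (congrArg₂ (· + ·) (act_tmul μ M _ c m).symm (act_tmul μ M _ c m).symm)
    rw [map_add, evalPure_add_left, add_smul]
  · change act μ M (P.carrier.obj.map (𝟙 U) b) t + act μ M (P.carrier.obj.map (𝟙 U) b') t = _
    rw [CategoryTheory.Functor.map_id]
    rfl

theorem act_smul_left (a : A.ring.obj.obj U) (b : P.carrier.obj.obj U)
    (t : (Q.tensorFunctor.obj M).val.obj U) : act μ M (a • b) t = a • act μ M b t := by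
  refine (act_eq μ M (b := a • b) (fun V g =>
    (DistribSMul.toAddMonoidHom (M.val.obj V) (A.ring.obj.map g a)).comp
      (actHom μ M (P.carrier.obj.map g b))) ?_ ?_ t).trans ?_
  · intro V W g h t
    refine (M.res_smul h _ _).trans (congrArg₂ (· • ·) ?_ ((res_act μ M h _ t).trans ?_))
    · rw [Functor.map_comp]; rfl
    · rw [Functor.map_comp]; rfl
  · intro V g c m
    refine Eq.trans ?_ (congrArg (A.ring.obj.map g a • ·) (act_tmul μ M _ c m).symm)
    rw [P.map_smul, evalPure_smul, mul_smul]
  · change A.ring.obj.map (𝟙 U) a • act μ M (P.carrier.obj.map (𝟙 U) b) t = _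
    rw [CategoryTheory.Functor.map_id, CategoryTheory.Functor.map_id]
    rfl

theorem act_balanced (b : P.carrier.obj.obj U) (s : B.ring.obj.obj U)
    (t : (Q.tensorFunctor.obj M).val.obj U) : act μ M (op s • b) t = act μ M b (s • t) := by
  refine (act_eq μ M (b := op s • b) (fun V g =>
    (actHom μ M (P.carrier.obj.map g b)).comp
      (DistribSMul.toAddMonoidHom _ (B.ring.obj.map g s))) ?_ ?_ t).trans ?_
  · intro V W g h t
    refine (res_act μ M h _ _).trans (congrArg₂ (act μ M) ?_ ?_)
    · rw [Functor.map_comp]; rfl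
    · refine (SheafOfModules.res_smul _ h _ _).trans ?_
      rw [Functor.map_comp]; rfl
  · intro V g c m
    change _ = act μ M (P.carrier.obj.map g b) (B.ring.obj.map g s • Q.tmul M c m)
    rw [smul_tmul, act_tmul, P.map_op_smul, evalPure_balanced]
  · change act μ M (P.carrier.obj.map (𝟙 U) b) (B.ring.obj.map (𝟙 U) s • t) = _
    rw [CategoryTheory.Functor.map_id, CategoryTheory.Functor.map_id]
    rfl

theorem exists_counit : ∃ ε : P.tensorFunctor.obj (Q.tensorFunctor.obj M) ⟶ M,
    ∀ (U : (Opens X)ᵒᵖ) (b : P.carrier.obj.obj U) (t : (Q.tensorFunctor.obj M).val.obj U),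
      ε.val.app U (P.tmul _ b t) = act μ M b t :=
  exists_tensor_desc P (Q.tensorFunctor.obj M) M
    (fun _ => AddMonoidHom.mk' (fun b => actHom μ M b)
      (fun b b' => AddMonoidHom.ext fun t => act_add_left μ M b b' t))
    (fun _ b s t => act_balanced μ M b s t) (fun g b t => res_act μ M g b t)
    (fun _ a b t => act_smul_left μ M a b t)

/-- The morphism `P ⊗_B (Q ⊗_A M) → M`, `b ⊗ c ⊗ m ↦ μ(b ⊗ c) m`. -/
def counitHom : P.tensorFunctor.obj (Q.tensorFunctor.obj M) ⟶ M :=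
  (exists_counit μ M).choose

theorem counitHom_tmul (b : P.carrier.obj.obj U) (t : (Q.tensorFunctor.obj M).val.obj U) :
    (counitHom μ M).val.app U (P.tmul _ b t) = act μ M b t :=
  (exists_counit μ M).choose_spec U b t

end Pairing

end Bimodule

end Morita

section Morita

variable {X : TopCat.{u}} {K : Sheaf (siteOf X) CommRingCat.{u}} {A B : SheafAlgebra K}

namespace Bimodule

theorem tensorFunctor_hom_ext {P : Bimodule A B} {M : SheafOfModules.{u} B.ring}
    {N : SheafOfModules.{u} A.ring} {φ ψ : P.tensorFunctor.obj M ⟶ N}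
    (h : ∀ (U : (Opens X)ᵒᵖ) (b : P.carrier.obj.obj U) (m : M.val.obj U),
      φ.val.app U (P.tmul M b m) = ψ.val.app U (P.tmul M b m)) : φ = ψ :=
  SheafOfModules.hom_ext_apply fun _ t => tensor_hom_ext N
    (fun V _ => (φ.val.app V).hom.toAddMonoidHom) (fun V _ => (ψ.val.app V).hom.toAddMonoidHom)
    (fun _ h t => SheafOfModules.res_app φ h t) (fun _ h t => SheafOfModules.res_app ψ h t)
    (fun V _ b m => h V b m) t

/-- The map `m ↦ b ⊗ m`. -/
def tmulHom (P : Bimodule A B) (M : SheafOfModules.{u} B.ring) {U : (Opens X)ᵒᵖ}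
    (b : P.carrier.obj.obj U) : M.val.obj U →+ (P.tensorFunctor.obj M).val.obj U :=
  AddMonoidHom.mk' (P.tmul M b) (P.tmul_add M b)

theorem sum_tmul (P : Bimodule A B) (M : SheafOfModules.{u} B.ring) {U : (Opens X)ᵒᵖ}
    {ι : Type*} (s : Finset ι) (b : ι → P.carrier.obj.obj U) (m : M.val.obj U) :
    P.tmul M (∑ i ∈ s, b i) m = ∑ i ∈ s, P.tmul M (b i) m :=
  map_sum (AddMonoidHom.mk' (fun b => P.tmul M b m) (fun b b' => P.add_tmul M b b' m)) b s

variable {P : Bimodule A B} {Q : Bimodule B A}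

/-- A morphism of bimodules is an isomorphism if the underlying morphism of sheaves is. -/
theorem isIso_of_isIso_hom {P Q : Bimodule A B} (φ : P ⟶ Q) [IsIso φ.hom] : IsIso φ := by
  have hinj : ∀ U, Function.Injective (φ.hom.hom.app U) := fun U =>
    Function.LeftInverse.injective (g := (inv φ.hom).hom.app U) fun x =>
      ConcreteCategory.congr_hom (NatTrans.congr_app
        (congrArg (fun f => f.hom) (IsIso.hom_inv_id φ.hom)) U) x
  have hr : ∀ U x, φ.hom.hom.app U ((inv φ.hom).hom.app U x) = x := fun U x =>
    ConcreteCategory.congr_hom (NatTrans.congr_app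
      (congrArg (fun f => f.hom) (IsIso.inv_hom_id φ.hom)) U) x
  let ψ : Q ⟶ P :=
    { hom := inv φ.hom
      map_smul := fun U a m => hinj U (by rw [φ.map_smul, hr, hr])
      map_op_smul := fun U a m => hinj U (by rw [φ.map_op_smul, hr, hr]) }
  exact ⟨ψ, Hom.ext (IsIso.hom_inv_id φ.hom), Hom.ext (IsIso.inv_hom_id φ.hom)⟩

/-- Near every point, the unit of `A` is a finite sum of sections `μ(b ⊗ c)`. -/
def LocallySplit (μ : P.tensor Q ⟶ regular A) : Prop :=
  ∀ (U : (Opens X)ᵒᵖ), ∀ x ∈ U.unop, ∃ (V : (Opens X)ᵒᵖ) (_ : U ⟶ V), x ∈ V.unop ∧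
    ∃ (n : ℕ) (b : Fin n → P.carrier.obj.obj V) (c : Fin n → Q.carrier.obj.obj V),
      ∑ i, evalPure μ (b i) (c i) = 1

section

variable (μ : P.tensor Q ⟶ regular A) (ν : Q.tensor P ⟶ regular B)
  (hν : ∀ {U : (Opens X)ᵒᵖ} (c : Q.carrier.obj.obj U) (b : P.carrier.obj.obj U)
    (c' : Q.carrier.obj.obj U), evalPure ν c b • c' = op (evalPure μ b c') • c)
  (hμ : ∀ {U : (Opens X)ᵒᵖ} (b : P.carrier.obj.obj U) (c : Q.carrier.obj.obj U)
    (b' : P.carrier.obj.obj U), evalPure μ b c • b' = op (evalPure ν c b') • b)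

include hν in
theorem evalPure_smul_eq_tmul_act (M : SheafOfModules.{u} A.ring) {U : (Opens X)ᵒᵖ}
    (c : Q.carrier.obj.obj U) (b : P.carrier.obj.obj U)
    (t : (Q.tensorFunctor.obj M).val.obj U) :
    evalPure ν c b • t = Q.tmul M c (act μ M b t) := by
  have h := tensor_hom_ext (P := Q) (M := M) (Q.tensorFunctor.obj M) (U := U)
    (fun V g => DistribSMul.toAddMonoidHom _ (B.ring.obj.map g (evalPure ν c b)))
    (fun V g => (Q.tmulHom M (Q.carrier.obj.map g c)).comp
      (actHom μ M (P.carrier.obj.map g b)))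
    (fun {V W} g h t => by
      refine (SheafOfModules.res_smul _ h _ t).trans ?_
      rw [Functor.map_comp]
      rfl)
    (fun {V W} g h t => by
      refine (Q.res_tmul M h _ (act μ M (P.carrier.obj.map g b) t)).trans ?_
      rw [res_act, Functor.map_comp, Functor.map_comp]
      rfl)
    (fun V g c' m => by
      change B.ring.obj.map g (evalPure ν c b) • Q.tmul M c' m =
        Q.tmul M (Q.carrier.obj.map g c) (act μ M (P.carrier.obj.map g b) (Q.tmul M c' m))
      rw [map_evalPure, smul_tmul, hν, op_smul_tmul, act_tmul]) t
  change B.ring.obj.map (𝟙 U) (evalPure ν c b) • t =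
    Q.tmul M (Q.carrier.obj.map (𝟙 U) c) (act μ M (P.carrier.obj.map (𝟙 U) b) t) at h
  rw [CategoryTheory.Functor.map_id, CategoryTheory.Functor.map_id,
    CategoryTheory.Functor.map_id] at h
  exact h

theorem res_counitHom (M : SheafOfModules.{u} A.ring) {U V : (Opens X)ᵒᵖ} (g : U ⟶ V)
    (t : (P.tensorFunctor.obj (Q.tensorFunctor.obj M)).val.obj U) :
    M.res g ((counitHom μ M).val.app U t) =
      (counitHom μ M).val.app V ((P.tensorFunctor.obj (Q.tensorFunctor.obj M)).res g t) :=
  SheafOfModules.res_app (counitHom μ M) g t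

theorem sum_map_evalPure {U V : (Opens X)ᵒᵖ} (g : U ⟶ V) {n : ℕ}
    {b : Fin n → P.carrier.obj.obj U} {c : Fin n → Q.carrier.obj.obj U}
    (h : ∑ i, evalPure μ (b i) (c i) = 1) :
    ∑ i, evalPure μ (P.carrier.obj.map g (b i)) (Q.carrier.obj.map g (c i)) = 1 := by
  simp only [← map_evalPure, ← map_sum, h, map_one]

include hν hμ in
/-- If `1 = Σ μ(b_i ⊗ c_i)` over `U`, then `m ↦ Σ b_i ⊗ c_i ⊗ m` is left inverse to
`b ⊗ c ⊗ m ↦ μ(b ⊗ c) m`. -/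
theorem eq_sum_tmul_counitHom (M : SheafOfModules.{u} A.ring) {U : (Opens X)ᵒᵖ} {n : ℕ}
    {b : Fin n → P.carrier.obj.obj U} {c : Fin n → Q.carrier.obj.obj U}
    (h : ∑ i, evalPure μ (b i) (c i) = 1)
    (t : (P.tensorFunctor.obj (Q.tensorFunctor.obj M)).val.obj U) :
    t = ∑ i, P.tmul _ (b i) (Q.tmul M (c i) ((counitHom μ M).val.app U t)) := by
  have key := tensor_hom_ext (P := P) (M := Q.tensorFunctor.obj M)
    (P.tensorFunctor.obj (Q.tensorFunctor.obj M)) (U := U)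
    (fun V g => AddMonoidHom.id _)
    (fun V g => ∑ i, ((P.tmulHom _ (P.carrier.obj.map g (b i))).comp
      (Q.tmulHom M (Q.carrier.obj.map g (c i)))).comp
        ((counitHom μ M).val.app V).hom.toAddMonoidHom)
    (fun {V W} g h t => rfl)
    (fun {V W} g h t => by
      simp only [AddMonoidHom.finsetSum_apply, map_sum]
      refine Finset.sum_congr rfl fun i _ => ?_
      refine (P.res_tmul _ h _ (Q.tmul M _ ((counitHom μ M).val.app V t))).trans ?_
      rw [res_tmul, res_counitHom, Functor.map_comp, Functor.map_comp]
      rfl)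
    (fun V g b' s => by
      simp only [AddMonoidHom.finsetSum_apply]
      change P.tmul _ b' s = ∑ i, P.tmul _ (P.carrier.obj.map g (b i))
        (Q.tmul M (Q.carrier.obj.map g (c i)) ((counitHom μ M).val.app V (P.tmul _ b' s)))
      simp only [counitHom_tmul, ← evalPure_smul_eq_tmul_act μ ν hν, ← op_smul_tmul, ← hμ]
      rw [← sum_tmul, ← Finset.sum_smul, sum_map_evalPure μ g h, one_smul]) t
  refine key.trans ?_
  simp only [AddMonoidHom.finsetSum_apply]
  refine Finset.sum_congr rfl fun i _ => ?_
  change P.tmul _ (P.carrier.obj.map (𝟙 U) (b i))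
        (Q.tmul M (Q.carrier.obj.map (𝟙 U) (c i)) ((counitHom μ M).val.app U t)) = _
  rw [CategoryTheory.Functor.map_id, CategoryTheory.Functor.map_id]
  rfl

include hν hμ in
theorem isIso_counitHom (hs : LocallySplit μ) (M : SheafOfModules.{u} A.ring) :
    IsIso (counitHom μ M) := by
  refine SheafOfModules.isIso_of_injective_of_locally_surjective _ (fun U t t' htt => ?_)
    (fun U m x hx => ?_)
  · refine SheafOfModules.eq_of_res _ fun x hx => ?_
    obtain ⟨V, g, hxV, n, b, c, h⟩ := hs U x hx
    refine ⟨V, g, hxV, ?_⟩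
    rw [eq_sum_tmul_counitHom μ ν hν hμ M h (SheafOfModules.res _ g t),
      eq_sum_tmul_counitHom μ ν hν hμ M h (SheafOfModules.res _ g t'), ← res_counitHom,
      ← res_counitHom, htt]
  · obtain ⟨V, g, hxV, n, b, c, h⟩ := hs U x hx
    refine ⟨V, g, ∑ i, P.tmul _ (b i) (Q.tmul M (c i) (M.res g m)), hxV, ?_⟩
    rw [map_sum]
    simp only [counitHom_tmul, act_tmul]
    rw [← Finset.sum_smul, h, one_smul]

theorem act_map {M N : SheafOfModules.{u} A.ring} (φ : M ⟶ N) {U : (Opens X)ᵒᵖ}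
    (b : P.carrier.obj.obj U) (t : (Q.tensorFunctor.obj M).val.obj U) :
    act μ N b ((Q.tensorFunctor.map φ).val.app U t) = φ.val.app U (act μ M b t) := by
  have h := tensor_hom_ext (P := Q) (M := M) N (U := U)
    (fun V g => (actHom μ N (P.carrier.obj.map g b)).comp
      ((Q.tensorFunctor.map φ).val.app V).hom.toAddMonoidHom)
    (fun V g => (φ.val.app V).hom.toAddMonoidHom.comp (actHom μ M (P.carrier.obj.map g b)))
    (fun {V W} g h t => by
      refine (res_act μ N h _ ((Q.tensorFunctor.map φ).val.app V t)).trans ?_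
      rw [SheafOfModules.res_app, Functor.map_comp]
      rfl)
    (fun {V W} g h t => by
      refine (SheafOfModules.res_app φ h (act μ M (P.carrier.obj.map g b) t)).trans ?_
      rw [res_act, Functor.map_comp]
      rfl)
    (fun V g c m => by
      change act μ N (P.carrier.obj.map g b) ((Q.tensorFunctor.map φ).val.app V (Q.tmul M c m)) =
        φ.val.app V (act μ M (P.carrier.obj.map g b) (Q.tmul M c m))
      rw [tensorFunctor_map_tmul, act_tmul, act_tmul, _root_.map_smul]) t
  change act μ N (P.carrier.obj.map (𝟙 U) b) ((Q.tensorFunctor.map φ).val.app U t) =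
    φ.val.app U (act μ M (P.carrier.obj.map (𝟙 U) b) t) at h
  rw [CategoryTheory.Functor.map_id] at h
  exact h

theorem counitHom_naturality {M N : SheafOfModules.{u} A.ring} (φ : M ⟶ N) :
    P.tensorFunctor.map (Q.tensorFunctor.map φ) ≫ counitHom μ N = counitHom μ M ≫ φ := by
  refine tensorFunctor_hom_ext fun U b t => ?_
  change (counitHom μ N).val.app U ((P.tensorFunctor.map (Q.tensorFunctor.map φ)).val.app U
    (P.tmul _ b t)) = φ.val.app U ((counitHom μ M).val.app U (P.tmul _ b t))
  rw [tensorFunctor_map_tmul, counitHom_tmul, counitHom_tmul, act_map]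

include hμ in
theorem act_eq_tmul_counitHom (M : SheafOfModules.{u} B.ring) {U : (Opens X)ᵒᵖ}
    (b : P.carrier.obj.obj U)
    (t : (Q.tensorFunctor.obj (P.tensorFunctor.obj M)).val.obj U) :
    act μ (P.tensorFunctor.obj M) b t = P.tmul M b ((counitHom ν M).val.app U t) := by
  refine (act_eq μ (P.tensorFunctor.obj M) (b := b)
    (fun V g => (P.tmulHom M (P.carrier.obj.map g b)).comp
      ((counitHom ν M).val.app V).hom.toAddMonoidHom) ?_ ?_ t).trans ?_
  · intro V W g h t
    refine (P.res_tmul M h _ ((counitHom ν M).val.app V t)).trans ?_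
    rw [res_counitHom, Functor.map_comp]
    rfl
  · intro V g c s
    change _ = P.tmul M (P.carrier.obj.map g b) ((counitHom ν M).val.app V (Q.tmul _ c s))
    rw [counitHom_tmul, evalPure_smul_eq_tmul_act ν μ hμ]
  · change P.tmul M (P.carrier.obj.map (𝟙 U) b) ((counitHom ν M).val.app U t) = _
    rw [CategoryTheory.Functor.map_id]
    rfl

include hμ in
theorem counitHom_tensorFunctor (M : SheafOfModules.{u} B.ring) :
    counitHom μ (P.tensorFunctor.obj M) = P.tensorFunctor.map (counitHom ν M) := by
  refine tensorFunctor_hom_ext fun U b t => ?_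
  rw [counitHom_tmul, tensorFunctor_map_tmul, act_eq_tmul_counitHom μ ν hμ]

include hν hμ in
theorem eq_sum_pure {U : (Opens X)ᵒᵖ} {n : ℕ}
    {b : Fin n → P.carrier.obj.obj U} {c : Fin n → Q.carrier.obj.obj U}
    (h : ∑ i, evalPure μ (b i) (c i) = 1) (t : (P.tensor Q).carrier.obj.obj U) :
    t = ∑ i, pure P Q (b i) (op (show A.ring.obj.obj U from μ.hom.hom.app U t) • c i) := by
  let μ' (V : (Opens X)ᵒᵖ) : (P.tensorFunctor.obj Q.leftModule).val.obj V →+ A.ring.obj.obj V :=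
    (μ.hom.hom.app V).hom
  have hnat : ∀ {V W : (Opens X)ᵒᵖ} (g : V ⟶ W) t, A.ring.obj.map g (μ' V t) =
      μ' W ((P.tensorFunctor.obj Q.leftModule).res g t) :=
    fun g t => (NatTrans.naturality_apply μ.hom.hom g t).symm
  let opSMul (V : (Opens X)ᵒᵖ) (c : Q.carrier.obj.obj V) :
      A.ring.obj.obj V →+ Q.leftModule.val.obj V :=
    AddMonoidHom.mk' (fun a => (op a • c : Q.carrier.obj.obj V))
      (fun a a' => add_smul (op a) (op a') c)
  have key := tensor_hom_ext (P := P) (M := Q.leftModule)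
    (P.tensorFunctor.obj Q.leftModule) (U := U)
    (fun V g => AddMonoidHom.id _)
    (fun V g => ∑ i, (P.tmulHom _ (P.carrier.obj.map g (b i))).comp
      ((opSMul V (Q.carrier.obj.map g (c i))).comp (μ' V)))
    (fun {V W} g h t => rfl)
    (fun {V W} g h t => by
      simp only [AddMonoidHom.finsetSum_apply, map_sum]
      refine Finset.sum_congr rfl fun i _ => ?_
      refine (P.res_tmul Q.leftModule h _ _).trans ?_
      refine congrArg₂ (P.tmul Q.leftModule) ?_ ((Q.map_op_smul h (μ' V t) _).trans ?_)
      · rw [Functor.map_comp]; rfl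
      · rw [hnat, Functor.map_comp]; rfl)
    (fun V g b' (c' : Q.carrier.obj.obj V) => by
      simp only [AddMonoidHom.finsetSum_apply]
      have e : ∀ i, P.tmul Q.leftModule (P.carrier.obj.map g (b i))
          (op (evalPure μ b' c') • Q.carrier.obj.map g (c i) : Q.carrier.obj.obj V) =
          P.tmul Q.leftModule (evalPure μ (P.carrier.obj.map g (b i))
            (Q.carrier.obj.map g (c i)) • b') c' := fun i =>
        (congrArg (P.tmul Q.leftModule _) (hν _ b' c').symm).trans
          ((P.op_smul_tmul Q.leftModule _ _ c').symm.trans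
            (congrArg (fun y => P.tmul Q.leftModule y c') (hμ _ _ b').symm))
      refine Eq.trans ?_ (Finset.sum_congr rfl fun i _ => (e i).symm)
      refine (congrArg (fun y => P.tmul Q.leftModule y c') ?_).trans
        (P.sum_tmul Q.leftModule Finset.univ _ c')
      rw [← Finset.sum_smul, sum_map_evalPure μ g h, one_smul]) t
  refine key.trans ?_
  refine (AddMonoidHom.finsetSum_apply _ _ _).trans ?_
  refine Finset.sum_congr rfl fun i _ => ?_
  change pure P Q (P.carrier.obj.map (𝟙 U) (b i))
    (op (μ' U t) • Q.carrier.obj.map (𝟙 U) (c i)) = _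
  rw [CategoryTheory.Functor.map_id, CategoryTheory.Functor.map_id]
  rfl

include hν hμ in
theorem isIso_of_locallySplit (hs : LocallySplit μ) : IsIso μ := by
  have : IsIso μ.hom := by
    refine isIso_of_injective_of_locally_surjective _ (fun U t t' htt => ?_)
      (fun U a x hx => ?_)
    · refine eq_of_locally_eq _ fun x hx => ?_
      obtain ⟨V, g, hxV, n, b, c, h⟩ := hs U x hx
      refine ⟨V, g, hxV, ?_⟩
      have e : μ.hom.hom.app V ((P.tensor Q).carrier.obj.map g t) =
          μ.hom.hom.app V ((P.tensor Q).carrier.obj.map g t') := by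
        rw [NatTrans.naturality_apply, NatTrans.naturality_apply, htt]
      rw [eq_sum_pure μ ν hν hμ h ((P.tensor Q).carrier.obj.map g t),
        eq_sum_pure μ ν hν hμ h ((P.tensor Q).carrier.obj.map g t'), e]
    · obtain ⟨V, g, hxV, n, b, c, h⟩ := hs U x hx
      let a' : A.ring.obj.obj V := A.ring.obj.map g a
      refine ⟨V, g, ∑ i, pure P Q (b i) (op a' • c i), hxV, ?_⟩
      refine (map_sum (μ.hom.hom.app V).hom _ _).trans ?_
      change ∑ i, evalPure μ (b i) (op a' • c i) = a'
      simp only [evalPure_op_smul]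
      rw [← Finset.sum_mul, h, one_mul]
  exact isIso_of_isIso_hom μ

/-- A Morita context whose two pairings locally reach the units is a Morita equivalence. -/
theorem isMoritaEquivalence_of_locallySplit
    (hν : ∀ {U : (Opens X)ᵒᵖ} (c : Q.carrier.obj.obj U) (b : P.carrier.obj.obj U)
      (c' : Q.carrier.obj.obj U), evalPure ν c b • c' = op (evalPure μ b c') • c)
    (hμ : ∀ {U : (Opens X)ᵒᵖ} (b : P.carrier.obj.obj U) (c : Q.carrier.obj.obj U)
      (b' : P.carrier.obj.obj U), evalPure μ b c • b' = op (evalPure ν c b') • b)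
    (hsμ : LocallySplit μ) (hsν : LocallySplit ν) : IsMoritaEquivalence P Q μ ν where
  isIso_fwd := isIso_of_locallySplit μ ν hν hμ hsμ
  isIso_bwd := isIso_of_locallySplit ν μ hμ hν hsν
  equivalence := by
    have h₁ : ∀ M, IsIso (counitHom μ M) := isIso_counitHom μ ν hν hμ hsμ
    have h₂ : ∀ M, IsIso (counitHom ν M) := isIso_counitHom ν μ hμ hν hsν
    let ε : Q.tensorFunctor ⋙ P.tensorFunctor ≅ 𝟭 (SheafOfModules.{u} A.ring) :=
      NatIso.ofComponents (fun M => @asIso _ _ _ _ (counitHom μ M) (h₁ M))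
        (fun φ => counitHom_naturality μ φ)
    let η : P.tensorFunctor ⋙ Q.tensorFunctor ≅ 𝟭 (SheafOfModules.{u} B.ring) :=
      NatIso.ofComponents (fun M => @asIso _ _ _ _ (counitHom ν M) (h₂ M))
        (fun φ => counitHom_naturality ν φ)
    refine ⟨η.symm, ε, fun M => ?_, fun M U c b m => ?_, fun M U b c m => ?_⟩
    · change P.tensorFunctor.map (η.inv.app M) ≫ counitHom μ (P.tensorFunctor.obj M) = 𝟙 _
      rw [counitHom_tensorFunctor μ ν hμ, ← Functor.map_comp]
      have : η.inv.app M ≫ counitHom ν M = 𝟙 _ := η.inv_hom_id_app M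
      rw [this, CategoryTheory.Functor.map_id]
    · change (counitHom ν M).val.app U _ = _
      rw [counitHom_tmul, act_tmul]
    · change (counitHom μ M).val.app U _ = _
      rw [counitHom_tmul, act_tmul]

end

end Bimodule

end Morita

section Matrix

variable {X : TopCat.{u}} {K : Sheaf (siteOf X) CommRingCat.{u}}

theorem Bimodule.tensorLift_pure {A B C : SheafAlgebra K} (P : Bimodule A B) (Q : Bimodule B C)
    (T : Bimodule A C)
    (β : ∀ U, P.carrier.obj.obj U →+ Q.carrier.obj.obj U →+ T.carrier.obj.obj U)
    (h₁ : ∀ U n (s : B.ring.obj.obj U) m, β U (op s • n) m = β U n (s • m))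
    (h₂ : ∀ (U V : (Opens X)ᵒᵖ) (g : U ⟶ V) n m, T.carrier.obj.map g (β U n m) =
      β V (P.carrier.obj.map g n) (Q.carrier.obj.map g m))
    (h₃ : ∀ U (a : A.ring.obj.obj U) n m, β U (a • n) m = a • β U n m)
    (h₄ : ∀ U (c : C.ring.obj.obj U) n m, β U n (op c • m) = op c • β U n m)
    {U : (Opens X)ᵒᵖ} (b : P.carrier.obj.obj U) (c : Q.carrier.obj.obj U) :
    (Bimodule.tensorLift P Q T β h₁ h₂ h₃ h₄).hom.hom.app U (Bimodule.pure P Q b c) = β U b c :=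
  ConcreteCategory.congr_hom (NatTrans.congr_app
    (CategoryTheory.toSheafify_sheafifyLift (siteOf X)
      ({ app := fun U => AddCommGrpCat.ofHom (BalancedTensor.lift (β U) (h₁ U))
         naturality := fun U V g => AddCommGrpCat.hom_ext (BalancedTensor.hom_ext
          (S := B.ring.obj.obj U) (M := Q.carrier.obj.obj U) fun n m => (h₂ U V g n m).symm) } :
        P.tensorPresheaf Q.leftModule.val ⟶ T.carrier.obj) T.carrier.property) U)
    (BalancedTensor.tmul _ b c)

namespace MatrixAlgebra

variable {q : ℕ} (A : MatrixAlgebra K q)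

/-- The dual of a generator `u` of the left `A_{jj}`-module `A_{ji}`: it takes `a u` to `a`. -/
def dualOfGenerator {i j : Fin (q + 1)} {V : Opens X}
    (u : (A.entry j i).val.obj (Opposite.op V))
    (hu : ∀ (W : Opens X) (g : W ⟶ V), Function.Bijective
      (fun a : (A.entry j j).val.obj (Opposite.op W) =>
        A.mul (Opposite.op W) a ((A.entry j i).val.presheaf.map g.op u))) :
    A.DualSection i j V where
  app W g := (AddEquiv.ofBijective ((A.mul (Opposite.op W)).flip
    ((A.entry j i).val.presheaf.map g.op u)) (hu W g)).symm
  app_mul W g a y := by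
    refine (AddEquiv.symm_apply_eq _).2 ?_
    obtain ⟨a', rfl⟩ := (hu W g).2 y
    have e : (AddEquiv.ofBijective ((A.mul (Opposite.op W)).flip
      ((A.entry j i).val.presheaf.map g.op u)) (hu W g)).symm
        (A.mul (Opposite.op W) a' ((A.entry j i).val.presheaf.map g.op u)) = a' :=
      (AddEquiv.symm_apply_eq _).2 rfl
    refine Eq.trans ?_ (congrArg (fun z => A.mul (Opposite.op W) (A.mul (Opposite.op W) a z)
      ((A.entry j i).val.presheaf.map g.op u)) e.symm)
    exact (A.mul_assoc _ _ _ _).symm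
  naturality W W' g h y := by
    refine (AddEquiv.symm_apply_eq _).2 ?_
    obtain ⟨a', rfl⟩ := (hu W g).2 y
    have e : (AddEquiv.ofBijective ((A.mul (Opposite.op W)).flip
      ((A.entry j i).val.presheaf.map g.op u)) (hu W g)).symm
        (A.mul (Opposite.op W) a' ((A.entry j i).val.presheaf.map g.op u)) = a' :=
      (AddEquiv.symm_apply_eq _).2 rfl
    refine Eq.trans ?_ (congrArg (fun z => A.mul (Opposite.op W')
      ((A.entry j j).val.presheaf.map h.op z)
      ((A.entry j i).val.presheaf.map (h ≫ g).op u)) e.symm)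
    refine (A.map_mul h.op _ _).trans (congrArg _ ?_)
    exact (ConcreteCategory.congr_hom ((A.entry j i).val.presheaf.map_comp g.op h.op) u).symm

variable {A}

theorem exists_local_inverse_of_le (hfree : A.LocallyFreeRankOne) (hperf : A.PerfectProduct)
    {i j : Fin (q + 1)} (hij : j ≤ i) (x : X) :
    ∃ (V : Opens X) (_ : x ∈ V) (u : (A.entry j i).val.obj (Opposite.op V))
      (y : (A.entry i j).val.obj (Opposite.op V)),
      A.mul _ u y = A.one j _ ∧ A.mul _ y u = A.one i _ := by
  obtain ⟨V₁, hx₁, u, hu⟩ := (hfree j i x).1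
  obtain ⟨V₂, hx₂, w, hw⟩ := (hfree j i x).2
  obtain ⟨y, hy, -⟩ := hperf i j hij V₁ (A.dualOfGenerator u hu)
  let g₁ : V₁ ⊓ V₂ ⟶ V₁ := Opens.infLELeft V₁ V₂
  let g₂ : V₁ ⊓ V₂ ⟶ V₂ := Opens.infLERight V₁ V₂
  let u' : (A.entry j i).val.obj (Opposite.op (V₁ ⊓ V₂)) :=
    (A.entry j i).val.presheaf.map g₁.op u
  let y' : (A.entry i j).val.obj (Opposite.op (V₁ ⊓ V₂)) :=
    (A.entry i j).val.presheaf.map g₁.op y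
  let w' : (A.entry j i).val.obj (Opposite.op (V₁ ⊓ V₂)) :=
    (A.entry j i).val.presheaf.map g₂.op w
  have huy : A.mul _ u' y' = A.one j _ := by
    refine (hy _ g₁ u').symm.trans ?_
    refine (AddEquiv.symm_apply_eq _).2 ?_
    exact (A.one_mul _ u').symm
  refine ⟨V₁ ⊓ V₂, ⟨hx₁, hx₂⟩, u', y', huy, ?_⟩
  obtain ⟨b, hb⟩ := (hu _ g₁).2 w'
  refine (hw _ g₂).1 ?_
  change A.mul _ w' (A.mul _ y' u') = A.mul _ w' (A.one i _)
  rw [A.mul_one, ← hb]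
  change A.mul _ (A.mul _ b u') (A.mul _ y' u') = A.mul _ b u'
  rw [A.mul_assoc, ← A.mul_assoc _ u' y' u', huy, A.one_mul]

/-- Near every point, `1_i` is the product of a section of `A_{ij}` and a section of `A_{ji}`. -/
theorem exists_local_inverse (hfree : A.LocallyFreeRankOne) (hperf : A.PerfectProduct)
    (i j : Fin (q + 1)) (x : X) :
    ∃ (V : Opens X) (_ : x ∈ V) (u : (A.entry i j).val.obj (Opposite.op V))
      (y : (A.entry j i).val.obj (Opposite.op V)), A.mul _ u y = A.one i _ := by
  rcases le_total i j with h | h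
  · obtain ⟨V, hx, u, y, h, -⟩ := exists_local_inverse_of_le hfree hperf h x
    exact ⟨V, hx, u, y, h⟩
  · obtain ⟨V, hx, u, y, -, h⟩ := exists_local_inverse_of_le hfree hperf h x
    exact ⟨V, hx, y, u, h⟩

section Rect

variable {m n : ℕ} (r : Fin m → Fin (q + 1)) (s : Fin n → Fin (q + 1))

theorem evalPure_rectPairing {U : (Opens X)ᵒᵖ} (b : A.Rect r s U) (c : A.Rect s r U) :
    Bimodule.evalPure (A.rectPairing r s) (P := A.rectBimodule r s) (Q := A.rectBimodule s r)
      b c = Rect.mul b c :=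
  Bimodule.tensorLift_pure (A.rectBimodule r s) (A.rectBimodule s r)
    (Bimodule.regular (A.rectAlgebra r)) _ _ _ _ _ b c

variable {r s}

/-- The matrix whose only non-zero entry is `a`, in the place `(i, j)`. -/
def Rect.single {U : (Opens X)ᵒᵖ} (i : Fin m) (j : Fin n)
    (a : (A.entry (r i) (s j)).val.obj U) : A.Rect r s U :=
  Pi.single i (Pi.single j a)

theorem Rect.single_apply_of_ne {U : (Opens X)ᵒᵖ} {i i' : Fin m} (j j' : Fin n)
    (a : (A.entry (r i) (s j)).val.obj U) (h : i' ≠ i) :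
    Rect.single (A := A) (r := r) (s := s) i j a i' j' = 0 := by
  rw [Rect.single, Pi.single_eq_of_ne h]; rfl

theorem Rect.single_mul_single_apply {U : (Opens X)ᵒᵖ} (i : Fin m) (k : Fin n) (j' : Fin m)
    {a : (A.entry (r i) (s k)).val.obj U} {b : (A.entry (s k) (r i)).val.obj U}
    (hab : A.mul U a b = A.one (r i) U) :
    Rect.mul (Rect.single (A := A) (r := r) (s := s) i k a)
      (Rect.single (A := A) (r := s) (s := r) k i b) i j' = Rect.one A r U i j' := by
  rw [Rect.mul, Finset.sum_eq_single k]
  · rw [Rect.single, Rect.single, Pi.single_eq_same, Pi.single_eq_same, Pi.single_eq_same,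
      Rect.one]
    by_cases h : j' = i
    · subst h
      rw [Pi.single_eq_same, Pi.single_eq_same, hab]
    · rw [Pi.single_eq_of_ne h, Pi.single_eq_of_ne h, map_zero]
  · intro l _ hl
    rw [Rect.single_apply_of_ne _ _ _ hl, map_zero]
  · simp

theorem Rect.sum_single_mul_single {U : (Opens X)ᵒᵖ} (k : Fin n)
    (a : ∀ i, (A.entry (r i) (s k)).val.obj U) (b : ∀ i, (A.entry (s k) (r i)).val.obj U)
    (hab : ∀ i, A.mul U (a i) (b i) = A.one (r i) U) :
    ∑ i, Rect.mul (Rect.single (A := A) (r := r) (s := s) i k (a i))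
      (Rect.single (A := A) (r := s) (s := r) k i (b i)) = Rect.one A r U := by
  ext i j
  have e : (∑ l, Rect.mul (Rect.single (A := A) (r := r) (s := s) l k (a l))
      (Rect.single (A := A) (r := s) (s := r) k l (b l))) i j =
      ∑ l, Rect.mul (Rect.single (A := A) (r := r) (s := s) l k (a l))
        (Rect.single (A := A) (r := s) (s := r) k l (b l)) i j :=
    map_sum (AddMonoidHom.mk' (fun y : A.Rect r r U => y i j) fun _ _ => rfl)
      (fun l => Rect.mul (Rect.single (A := A) (r := r) (s := s) l k (a l))
        (Rect.single (A := A) (r := s) (s := r) k l (b l))) Finset.univ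
  rw [e, Finset.sum_eq_single i, Rect.single_mul_single_apply i k j (hab i)]
  · intro l _ hl
    refine Finset.sum_eq_zero fun l' _ => ?_
    rw [Rect.single_apply_of_ne _ _ _ hl.symm, map_zero, AddMonoidHom.zero_apply]
  · simp

theorem locallySplit_rectPairing (hfree : A.LocallyFreeRankOne) (hperf : A.PerfectProduct)
    (k : Fin n) : Bimodule.LocallySplit (A.rectPairing r s) := by
  intro U x hx
  choose V hxV u y huy using fun i => exists_local_inverse hfree hperf (r i) (s k) x
  let W : Opens X := U.unop ⊓ Finset.univ.inf V
  have hW : ∀ i, W ≤ V i := fun i => inf_le_right.trans (Finset.inf_le (Finset.mem_univ i))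
  have hxW : x ∈ W := by
    refine ⟨hx, ?_⟩
    rw [Opens.coe_finset_inf]
    simpa using hxV
  refine ⟨Opposite.op W, (homOfLE inf_le_left).op, hxW, m,
    fun i => Rect.single (A := A) (r := r) (s := s) i k
      ((A.entry _ _).val.presheaf.map (homOfLE (hW i)).op (u i)),
    fun i => Rect.single (A := A) (r := s) (s := r) k i
      ((A.entry _ _).val.presheaf.map (homOfLE (hW i)).op (y i)), ?_⟩
  refine (Finset.sum_congr rfl fun i _ => evalPure_rectPairing (A := A) r s _ _).trans ?_
  exact Rect.sum_single_mul_single (A := A) (r := r) (s := s) k _ _ fun i => by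
    refine (A.map_mul _ _ _).symm.trans ?_
    rw [huy, A.map_one]

variable (r s) in
theorem isMoritaEquivalence_rectBimodule (hfree : A.LocallyFreeRankOne)
    (hperf : A.PerfectProduct) (i : Fin m) (j : Fin n) :
    Bimodule.IsMoritaEquivalence (A.rectBimodule r s) (A.rectBimodule s r)
      (A.rectPairing r s) (A.rectPairing s r) := by
  have assoc : ∀ {m n : ℕ} (r : Fin m → Fin (q + 1)) (s : Fin n → Fin (q + 1))
      {U : (Opens X)ᵒᵖ} (b : (A.rectBimodule r s).carrier.obj.obj U)
      (c : (A.rectBimodule s r).carrier.obj.obj U) (b' : (A.rectBimodule r s).carrier.obj.obj U),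
      Bimodule.evalPure (A.rectPairing r s) b c • b' =
        op (Bimodule.evalPure (A.rectPairing s r) c b') • b := by
    intro m n r s U b c b'
    refine (congrArg (fun a : A.Rect r r U => Rect.mul (A := A) (s := r) (t := s) a b')
      (evalPure_rectPairing r s b c)).trans ?_
    refine Eq.trans ?_ (congrArg (fun a : A.Rect s s U => Rect.mul (A := A) (r := r) b a)
      (evalPure_rectPairing s r c b')).symm
    exact Rect.mul_assoc (A := A) (r := r) (s := s) (t := r) (v := s) b c b'
  exact Bimodule.isMoritaEquivalence_of_locallySplit _ _ (assoc s r) (assoc r s)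
    (locallySplit_rectPairing hfree hperf j) (locallySplit_rectPairing hfree hperf i)

end Rect

end MatrixAlgebra

end Matrix

end

theorem combinatorial_restriction_morita_equivalence
    {X : TopCat.{u}} (K : Sheaf (siteOf X) CommRingCat.{u}) {p q : ℕ}
    (A : MatrixAlgebra K q) (hfree : A.LocallyFreeRankOne) (hperf : A.PerfectProduct)
    (f : SimplexCategory.mk p ⟶ SimplexCategory.mk q) :
    Bimodule.IsMoritaEquivalence (A.bimod f) (A.bimodInv f) (A.alphaFwd f) (A.alphaBwd f) := by
  exact MatrixAlgebra.isMoritaEquivalence_rectBimodule id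
    (fun j : Fin (p + 1) => f.toOrderHom j) hfree hperf 0 0
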